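/- arXiv:2006.01853 — 2 statements merged into one kernel-verified Lean document; each statement's English description precedes it below -/
import Mathlib

section
/- Let d ≥ 1 and let 𝒬 be a finite set of dyadic cubes in ℝ^d. Let Ω ⊆ ℝ^d be open with ⋃_{Q∈𝒬} interior(Q) ⊆ Ω and let f ∈ L¹(Ω). For each λ ∈ ℝ let 𝒬_λ be the set of maximal cubes (with respect to inclusion) of { Q ∈ 𝒬 : f_Q > λ }. Then there is a constant C depending only on d such that Σ_{Q∈𝒬} ∫_ℝ 1{ Q ∈ 𝒬_λ and |Q ∩ {f > λ}| ≥ 2^{-d-2}|Q| } · σ(∂Q \ cl*{f > λ}) dλ ≤ C · var_{⋃_{Q∈𝒬} interior(Q)} f, where ∂Q denotes the topological boundary of Q. -/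
open MeasureTheory Metric Set Filter
open scoped ENNReal Topology

noncomputable section

/-- `ℝ^d` as Euclidean space. -/
abbrev Ed (d : ℕ) := EuclideanSpace ℝ (Fin d)

/-- A dyadic cube `∏_i [2^n m_i, 2^n (m_i + 1))`. -/
def IsDyadicCube {d : ℕ} (Q : Set (Ed d)) : Prop :=
  ∃ (n : ℤ) (m : Fin d → ℤ),
    Q = {x : Ed d | ∀ i, x i ∈ Set.Ico ((2:ℝ)^n * m i) ((2:ℝ)^n * (m i + 1))}

/-- Divergence of a vector field `φ : ℝ^d → ℝ^d`. -/
def divergence {d : ℕ} (φ : Ed d → Ed d) (x : Ed d) : ℝ :=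
  ∑ i, fderiv ℝ φ x (EuclideanSpace.single i 1) i

/-- The variation of `f` in `Ω`. -/
def var {d : ℕ} (Ω : Set (Ed d)) (f : Ed d → ℝ) : ℝ≥0∞ :=
  ⨆ φ ∈ {φ : Ed d → Ed d | ContDiff ℝ 1 φ ∧ HasCompactSupport φ ∧ tsupport φ ⊆ Ω ∧
      ∀ x, ‖φ x‖ ≤ 1},
    ENNReal.ofReal (∫ x in Ω, f x * divergence φ x)

/-- The measure-theoretic closure. -/
def mtClosure {d : ℕ} (E : Set (Ed d)) : Set (Ed d) :=
  {x | 0 < Filter.limsup (fun r : ℝ => volume (ball x r ∩ E) / ENNReal.ofReal (r ^ d)) (𝓝[>] 0)}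

/-- `Q` is a maximal cube (w.r.t. inclusion) of `{Q ∈ 𝒬 : ⨍_Q f > λ}`. -/
def IsMaximalCube {d : ℕ} (𝒬 : Finset (Set (Ed d))) (f : Ed d → ℝ) (lam : ℝ)
    (Q : Set (Ed d)) : Prop :=
  Q ∈ 𝒬 ∧ lam < ⨍ z in Q, f z ∧
    ∀ P ∈ 𝒬, lam < (⨍ z in P, f z) → Q ⊆ P → P = Q

/-- The points of `A` whose translate by `v` is in `A`, and that `E` separates from it. -/
def jumpSet {d : ℕ} (A E : Set (Ed d)) (v : Ed d) : Set (Ed d) :=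
  {x | x ∈ A ∧ x + v ∈ A ∧ ¬(x ∈ E ↔ x + v ∈ E)}

/-- The open cube of side length `L` with lower corner `a`. -/
def openBox {d : ℕ} (a : Fin d → ℝ) (L : ℝ) : Set (Ed d) :=
  {x | ∀ i, x i ∈ Ioo (a i) (a i + L)}

lemma isOpen_openBox {d : ℕ} (a : Fin d → ℝ) (L : ℝ) : IsOpen (openBox a L) := by
  simp only [openBox, ofPred_forall]
  exact isOpen_iInter_of_finite fun i =>
    isOpen_Ioo.preimage (EuclideanSpace.proj i : Ed d →L[ℝ] ℝ).continuous

lemma convex_openBox {d : ℕ} (a : Fin d → ℝ) (L : ℝ) : Convex ℝ (openBox a L) := by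
  simp only [openBox, ofPred_forall]
  exact convex_iInter fun i =>
    (convex_Ioo _ _).linear_preimage (EuclideanSpace.proj i : Ed d →L[ℝ] ℝ).toLinearMap

lemma volume_openBox {d : ℕ} (a : Fin d → ℝ) (L : ℝ) :
    volume (openBox a L) = ENNReal.ofReal L ^ d := by
  have h := (PiLp.volume_preserving_ofLp (Fin d)).measure_preimage
    (s := Set.univ.pi fun i => Ioo (a i) (a i + L))
    (MeasurableSet.univ_pi fun i => measurableSet_Ioo).nullMeasurableSet
  have e : openBox a L =
      (WithLp.ofLp ⁻¹' (Set.univ.pi fun i => Ioo (a i) (a i + L)) : Set (Ed d)) := by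
    ext x; simp [openBox]
  rw [e, h, Real.volume_pi_Ioo]
  simp

lemma measurableSet_jumpSet {d : ℕ} {A E : Set (Ed d)} (hA : MeasurableSet A)
    (hE : MeasurableSet E) (v : Ed d) : MeasurableSet (jumpSet A E v) := by
  have hv : Measurable fun x : Ed d => x + v := measurable_add_const v
  have : jumpSet A E v = A ∩ ((fun x => x + v) ⁻¹' A ∩
      ((E \ (fun x => x + v) ⁻¹' E) ∪ ((fun x => x + v) ⁻¹' E \ E))) := by
    ext x; simp only [jumpSet, mem_ofPred_eq, mem_inter_iff, mem_union, Set.mem_sdiff, mem_preimage]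
    tauto
  rw [this]
  exact hA.inter ((hv hA).inter ((hE.diff (hv hE)).union ((hv hE).diff hE)))

lemma volume_setOf_add_mem {d : ℕ} (S : Set (Ed d)) (v : Ed d) :
    volume {x | x + v ∈ S} = volume S :=
  measure_preimage_add_right volume v S

lemma volume_jumpSet_neg {d : ℕ} (A E : Set (Ed d)) (v : Ed d) :
    volume (jumpSet A E (-v)) = volume (jumpSet A E v) := by
  rw [← volume_setOf_add_mem (jumpSet A E (-v)) v]
  congr 1
  ext x
  simp only [jumpSet, mem_ofPred_eq, add_neg_cancel_right]
  tauto

lemma volume_jumpSet_nsmul_le {d : ℕ} {A : Set (Ed d)} (hA : Convex ℝ A) (E : Set (Ed d))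
    (v : Ed d) (k : ℕ) :
    volume (jumpSet A E (k • v)) ≤ k * volume (jumpSet A E v) := by
  induction k with
  | zero => simp [jumpSet]
  | succ k ih =>
    have hsub : jumpSet A E ((k + 1) • v) ⊆
        jumpSet A E (k • v) ∪ {x | x + k • v ∈ jumpSet A E v} := by
      rintro x ⟨h1, h2, h3⟩
      have hmid : x + k • v ∈ A := by
        have := hA.add_smul_mem h1 h2 (t := (k : ℝ) / (k + 1))
          ⟨by positivity, by rw [div_le_one (by positivity)]; linarith⟩
        convert this using 2
        rw [← Nat.cast_smul_eq_nsmul ℝ (k + 1), smul_smul]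
        push_cast
        rw [div_mul_cancel₀ _ (by positivity), Nat.cast_smul_eq_nsmul]
      have hadd : x + (k + 1) • v = x + k • v + v := by rw [succ_nsmul, add_assoc]
      rw [hadd] at h2 h3
      simp only [jumpSet, mem_union, mem_ofPred_eq]
      tauto
    calc volume (jumpSet A E ((k + 1) • v))
        ≤ volume (jumpSet A E (k • v)) + volume {x | x + k • v ∈ jumpSet A E v} :=
          (measure_mono hsub).trans (measure_union_le _ _)
      _ ≤ k * volume (jumpSet A E v) + volume (jumpSet A E v) := by
          rw [volume_setOf_add_mem]; gcongr
      _ = _ := by push_cast; ring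

lemma volume_jumpSet_zsmul_le {d : ℕ} {A : Set (Ed d)} (hA : Convex ℝ A) (E : Set (Ed d))
    (v : Ed d) (k : ℤ) :
    volume (jumpSet A E (k • v)) ≤ k.natAbs * volume (jumpSet A E v) := by
  obtain ⟨m, rfl | rfl⟩ := k.eq_nat_or_neg
  · simpa using volume_jumpSet_nsmul_le hA E v m
  · simpa [volume_jumpSet_neg] using volume_jumpSet_nsmul_le hA E v m

lemma volume_jumpSet_openBox_le {d : ℕ} (a : Fin d → ℝ) (L : ℝ) (E : Set (Ed d)) (z : Ed d) :
    volume (jumpSet (openBox a L) E z) ≤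
      ∑ i, volume (jumpSet (openBox a L) E (EuclideanSpace.single i (z i))) := by
  classical
  set A := openBox a L
  let zs : Finset (Fin d) → Ed d := fun s => ∑ i ∈ s, EuclideanSpace.single i (z i)
  have hzs : ∀ s j, zs s j = if j ∈ s then z j else 0 := by
    intro s j
    simp only [zs, WithLp.ofLp_sum, Finset.sum_apply, PiLp.single_apply]
    simp
  have key : ∀ s : Finset (Fin d),
      volume {x | x ∈ A ∧ x + z ∈ A ∧ ¬(x ∈ E ↔ x + zs s ∈ E)} ≤
        ∑ i ∈ s, volume (jumpSet A E (EuclideanSpace.single i (z i))) := by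
    intro s
    induction s using Finset.induction_on with
    | empty => simp [zs]
    | insert i s his ih =>
      have hmem : ∀ t x, x ∈ A → x + z ∈ A → x + zs t ∈ A := by
        intro t x h1 h2 j
        have h1 := h1 j
        have h2 := h2 j
        simp only [PiLp.add_apply, hzs] at h2 ⊢
        split_ifs
        · exact h2
        · simpa using h1
      have hadd : zs (insert i s) = zs s + EuclideanSpace.single i (z i) := by
        simp only [zs]; rw [Finset.sum_insert his, add_comm]
      rw [Finset.sum_insert his, add_comm]
      refine le_trans ?_ (add_le_add ih (volume_setOf_add_mem _ (zs s)).le)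
      refine (measure_mono ?_).trans (measure_union_le _ _)
      rintro x ⟨h1, h2, h3⟩
      have h4 := hmem s x h1 h2
      have h5 := hmem (insert i s) x h1 h2
      rw [hadd, ← add_assoc] at h3 h5
      simp only [jumpSet, mem_union, mem_ofPred_eq]
      tauto
  have huniv : zs Finset.univ = z := by
    ext j; simp [hzs]
  have h := key Finset.univ
  rw [huniv] at h
  exact h

lemma tendsto_volume_setOf_add_mem_diff {d : ℕ} {B : Set (Ed d)} (hB : MeasurableSet B)
    (hBt : volume B ≠ ∞) (z : Ed d) :
    Tendsto (fun w => volume ({x | x + z ∈ B} \ {x | x + w ∈ B})) (𝓝 z) (𝓝 0) := by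
  let F : Ed d → C(Ed d, Ed d) := fun w => ⟨fun x => x + w, by fun_prop⟩
  have hF : Continuous F := ContinuousMap.continuous_of_continuous_uncurry _ (by
    simp only [Function.uncurry_def, F]
    exact continuous_snd.add continuous_fst)
  have h := tendsto_measure_symmDiff_preimage_nhds_zero (μ := volume) (ν := volume)
    (hF.tendsto z) (Eventually.of_forall fun w => measurePreserving_add_right volume w)
    (measurePreserving_add_right volume z) hB.nullMeasurableSet hBt
  refine tendsto_of_tendsto_of_tendsto_of_le_of_le tendsto_const_nhds h
    (fun _ => zero_le) fun w => measure_mono ?_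
  exact subset_union_right

lemma volume_inter_mul_volume_diff_le {d : ℕ} {a : Fin d → ℝ} {L : ℝ} {E : Set (Ed d)}
    (hE : MeasurableSet E) {S : Set (Ed d)} (hS : Dense S) {c : ℝ≥0∞}
    (hc : ∀ z ∈ S, (∀ i, |z i| < L) → volume (jumpSet (openBox a L) E z) ≤ c) :
    volume (openBox a L ∩ E) * volume (openBox a L \ E) ≤ ENNReal.ofReal (2 * L) ^ d * c := by
  set A := openBox a L
  have hAm : MeasurableSet A := (isOpen_openBox a L).measurableSet
  have hAE : MeasurableSet (A ∩ E) := hAm.inter hE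
  have hB : MeasurableSet (A \ E) := hAm.diff hE
  have hBt : volume (A \ E) ≠ ∞ := ne_top_of_le_ne_top
    (by rw [volume_openBox]; exact ENNReal.pow_ne_top ENNReal.ofReal_ne_top)
    (measure_mono (μ := volume) (sdiff_subset : A \ E ⊆ A))
  let B' : Set (Ed d) := openBox (fun _ => -L) (2 * L)
  have hB' : ∀ z : Ed d, z ∈ B' ↔ ∀ i, |z i| < L := fun z => by
    simp only [B', openBox, mem_ofPred_eq, mem_Ioo, abs_lt]
    exact forall_congr' fun i => and_congr Iff.rfl (by constructor <;> intro h <;> linarith)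
  let φ : Ed d → ℝ≥0∞ := fun z => volume (A ∩ E ∩ {x | x + z ∈ A \ E})
  have hφ_le : ∀ z, φ z ≤ volume (jumpSet A E z) := fun z => measure_mono (by
    rintro x ⟨⟨h1, h2⟩, h3, h4⟩
    exact ⟨h1, h3, by tauto⟩)
  have hφ_zero : ∀ z, z ∉ B' → φ z = 0 := by
    intro z hz
    have : A ∩ E ∩ {x | x + z ∈ A \ E} = ∅ := by
      by_contra hne
      obtain ⟨x, ⟨h1, h2⟩, h3, h4⟩ := nonempty_iff_ne_empty.2 hne
      refine hz ((hB' z).2 fun i => ?_)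
      have h1 := h1 i
      have h3 := h3 i
      simp only [PiLp.add_apply, mem_Ioo] at h1 h3
      rw [abs_lt]; constructor <;> linarith [h1.1, h1.2, h3.1, h3.2]
    simp only [φ, this, measure_empty]
  have hφ_c : ∀ z ∈ B', φ z ≤ c := by
    intro z hz
    refine le_of_forall_pos_le_add fun ε hε => ?_
    have h1 := (tendsto_volume_setOf_add_mem_diff hB hBt z).eventually (gt_mem_nhds hε)
    have h2 : ∀ᶠ w in 𝓝 z, w ∈ B' := (isOpen_openBox _ _).mem_nhds hz
    obtain ⟨w, hwS, hw1, hw2⟩ := ((mem_closure_iff_frequently.1 (hS z)).and_eventually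
      (h1.and h2)).exists
    calc φ z ≤ φ w + volume ({x | x + z ∈ A \ E} \ {x | x + w ∈ A \ E}) := by
          refine (measure_mono ?_).trans (measure_union_le _ _)
          intro x hx
          by_cases hxw : x + w ∈ A \ E
          · exact Or.inl ⟨hx.1, hxw⟩
          · exact Or.inr ⟨hx.2, hxw⟩
      _ ≤ c + ε := add_le_add ((hφ_le w).trans (hc w hwS ((hB' w).1 hw2))) hw1.le
  have hprod : ∫⁻ z, φ z = volume (A ∩ E) * volume (A \ E) := by
    have hmeas : MeasurableSet {p : Ed d × Ed d | p.2 ∈ A ∩ E ∧ p.2 + p.1 ∈ A \ E} :=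
      (measurable_snd hAE).inter ((measurable_snd.add measurable_fst) hB)
    have e1 := Measure.prod_apply (μ := (volume : Measure (Ed d)))
      (ν := (volume : Measure (Ed d))) hmeas
    have e2 := Measure.prod_apply_symm (μ := (volume : Measure (Ed d)))
      (ν := (volume : Measure (Ed d))) hmeas
    calc ∫⁻ z, φ z = ∫⁻ x, (A ∩ E).indicator (fun _ => volume (A \ E)) x := by
          refine e1.symm.trans (e2.trans (lintegral_congr fun x => ?_))
          by_cases hx : x ∈ A ∩ E
          · rw [indicator_of_mem hx, ← measure_preimage_add volume x (A \ E)]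
            congr 1; ext z
            exact ⟨fun h => h.2, fun h => ⟨hx, h⟩⟩
          · rw [indicator_of_notMem hx]
            convert measure_empty (μ := (volume : Measure (Ed d)))
            ext z
            exact ⟨fun h => hx h.1, fun h => h.elim⟩
      _ = _ := by rw [lintegral_indicator_const hAE, mul_comm]
  rw [← hprod]
  calc ∫⁻ z, φ z ≤ ∫⁻ z, B'.indicator (fun _ => c) z := lintegral_mono fun z => by
        by_cases hz : z ∈ B'
        · rw [indicator_of_mem hz]; exact hφ_c z hz
        · rw [hφ_zero z hz]; exact zero_le
    _ = _ := by
        rw [lintegral_indicator_const (isOpen_openBox _ _).measurableSet, volume_openBox, mul_comm]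

lemma mul_volume_le_of_disjoint_translates {d : ℕ} {A E T Z : Set (Ed d)}
    (hE : MeasurableSet E) (hA : MeasurableSet A) (hT : MeasurableSet T) (v : Ed d) (N : ℕ)
    (hTA : ∀ k < N, ∀ x ∈ T, x + k • v ∈ A)
    (hdisj : ∀ k < N, ∀ l < N, ∀ x ∈ T, ∀ y ∈ T, x + k • v = y + l • v → k = l)
    (hZT : Z ⊆ T) (hZE : Disjoint Z E) :
    N * volume Z ≤ N * volume (jumpSet A E v) + volume (A \ E) := by
  let Tr : ℕ → Set (Ed d) := fun k => {y | y - k • v ∈ T}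
  have hTr : ∀ k, MeasurableSet (Tr k) := fun k => (measurable_sub_const (k • v)) hT
  have hvol : ∀ k (S : Set (Ed d)), volume {x | x ∈ T ∧ x + k • v ∈ S} = volume (Tr k ∩ S) := by
    intro k S
    rw [← volume_setOf_add_mem (Tr k ∩ S) (k • v)]
    congr 1; ext x; simp [Tr]
  have hpd : (Finset.range N : Set ℕ).PairwiseDisjoint Tr := by
    intro k hk l hl hkl
    rw [Function.onFun, Set.disjoint_left]
    intro y h1 h2
    exact hkl (hdisj k (by simpa using hk) l (by simpa using hl) _ h1 _ h2 (by simp))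
  have hsum : ∀ S : Set (Ed d), ∀ M ≤ N, MeasurableSet S →
      ∑ k ∈ Finset.range M, volume (Tr k ∩ S) ≤ volume S := by
    intro S M hM hS
    rw [← measure_biUnion_finset
      ((hpd.subset (by exact_mod_cast Finset.range_subset_range.2 hM)).mono_on
        fun k _ => inter_subset_left) fun k _ => (hTr k).inter hS]
    exact measure_mono (iUnion₂_subset fun _ _ => inter_subset_right)
  have hJ : MeasurableSet (jumpSet A E v) := measurableSet_jumpSet hA hE v
  have hk : ∀ k ∈ Finset.range N,
      volume Z ≤ volume (jumpSet A E v) + volume (Tr k ∩ (A \ E)) := by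
    intro k hk
    have hkN : k < N := by simpa using hk
    have hsub : Z ⊆ (⋃ l ∈ Finset.range k, {x | x ∈ T ∧ x + l • v ∈ jumpSet A E v}) ∪
        {x | x ∈ T ∧ x + k • v ∈ A \ E} := by
      intro x hx
      by_cases hxk : x + k • v ∈ E
      · left
        by_contra hcon
        simp only [mem_iUnion, not_exists] at hcon
        have : ∀ l ≤ k, x + l • v ∉ E := by
          intro l
          induction l with
          | zero => intro _; simpa using Set.disjoint_left.1 hZE hx
          | succ l ih =>
            intro hl h
            have h0 := ih (by omega)
            refine hcon l (by simpa using hl) ⟨hZT hx, hTA l (by omega) x (hZT hx), ?_⟩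
            have e : x + (l + 1) • v = x + l • v + v := by rw [succ_nsmul, add_assoc]
            have h2 := hTA (l + 1) (by omega) x (hZT hx)
            rw [e] at h h2
            exact ⟨h2, by tauto⟩
        exact this k le_rfl hxk
      · exact Or.inr ⟨hZT hx, hTA k hkN x (hZT hx), hxk⟩
    calc volume Z ≤ _ := (measure_mono hsub).trans (measure_union_le _ _)
      _ ≤ (∑ l ∈ Finset.range k, volume {x | x ∈ T ∧ x + l • v ∈ jumpSet A E v}) +
          volume {x | x ∈ T ∧ x + k • v ∈ A \ E} := by
          gcongr; exact measure_biUnion_finset_le _ _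
      _ ≤ _ := by
          simp only [hvol]
          gcongr
          exact hsum _ k hkN.le hJ
  calc N * volume Z = ∑ k ∈ Finset.range N, volume Z := by simp
    _ ≤ ∑ k ∈ Finset.range N, (volume (jumpSet A E v) + volume (Tr k ∩ (A \ E))) :=
        Finset.sum_le_sum hk
    _ ≤ _ := by
        rw [Finset.sum_add_distrib]
        simp only [Finset.sum_const, Finset.card_range, nsmul_eq_mul]
        gcongr
        exact hsum _ N le_rfl (hA.diff hE)

/-- The point of `ℝ^(n+1)` with `i`-th coordinate `c` and remaining coordinates `y`. -/
def insertCoord {n : ℕ} (i : Fin (n + 1)) (c : ℝ) (y : Fin n → ℝ) : Ed (n + 1) :=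
  WithLp.toLp 2 (i.insertNth (α := fun _ => ℝ) c y)

/-- The coordinates of a point of `ℝ^(n+1)` other than the `i`-th one. -/
def removeCoord {n : ℕ} (i : Fin (n + 1)) (x : Ed (n + 1)) : Fin n → ℝ :=
  fun j => x (i.succAbove j)

lemma insertCoord_removeCoord {n : ℕ} (i : Fin (n + 1)) (x : Ed (n + 1)) :
    insertCoord i (x i) (removeCoord i x) = x := by
  ext k
  rcases eq_or_ne k i with rfl | hk
  · simp [insertCoord]
  · obtain ⟨j, rfl⟩ := Fin.exists_succAbove_eq hk
    simp [insertCoord, removeCoord]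

lemma volume_setOf_coord_mem_and {n : ℕ} (i : Fin (n + 1)) (J : Set ℝ) (G : Set (Fin n → ℝ)) :
    volume {x : Ed (n + 1) | x i ∈ J ∧ removeCoord i x ∈ G} = volume J * volume G := by
  have h := ((EuclideanSpace.volume_preserving_symm_measurableEquiv_toLp (Fin (n + 1))).trans
    (volume_preserving_piFinSuccAbove (fun _ : Fin (n + 1) => ℝ) i)).measure_preimage_equiv
    (J ×ˢ G)
  rw [Measure.volume_eq_prod, Measure.prod_prod] at h
  rw [← h]
  rfl

lemma dist_lt_of_forall_abs_sub_le {n : ℕ} {x y : Ed (n + 1)} {h : ℝ} (hh : 0 < h)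
    (hxy : ∀ k, |x k - y k| ≤ h) : dist x y < (n + 2) * h := by
  rw [EuclideanSpace.dist_eq, Real.sqrt_lt' (by positivity)]
  calc ∑ k, dist (x k) (y k) ^ 2 ≤ ∑ _k : Fin (n + 1), h ^ 2 :=
        Finset.sum_le_sum fun k _ => by
          rw [Real.dist_eq]; exact pow_le_pow_left₀ (abs_nonneg _) (hxy k) 2
    _ = (n + 1) * h ^ 2 := by simp
    _ < ((n + 2) * h) ^ 2 := by
        rw [mul_pow]
        have : (0 : ℝ) ≤ n := n.cast_nonneg
        gcongr
        nlinarith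

lemma volume_inter_le_of_cells {n : ℕ} {i : Fin (n + 1)} {c h : ℝ} (hh : 0 < h) {N : ℕ}
    {a : Fin n → ℝ} {W E : Set (Ed (n + 1))} {b : ℝ≥0∞}
    (hWc : ∀ w ∈ W, |w i - c| ≤ h)
    (hWa : ∀ w ∈ W, ∀ j, removeCoord i w j ∈ Ioo (a j) (a j + N * h))
    (hWb : ∀ w ∈ W, volume (ball (insertCoord i c (removeCoord i w)) ((n + 2) * h) ∩ E) ≤ b) :
    volume (W ∩ E) ≤ N ^ n * b := by
  let Wm : (Fin n → Fin N) → Set (Ed (n + 1)) := fun m =>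
    {w | w ∈ W ∧ ∀ j, removeCoord i w j ∈ Ico (a j + (m j : ℕ) * h) (a j + ((m j : ℕ) + 1) * h)}
  have hcov : W ∩ E ⊆ ⋃ m, Wm m ∩ E := by
    rintro w ⟨hw, hwE⟩
    have hfl : ∀ j, ⌊(removeCoord i w j - a j) / h⌋₊ < N := fun j => by
      have := hWa w hw j
      rw [Nat.floor_lt (div_nonneg (by linarith [this.1]) hh.le), div_lt_iff₀ hh]
      linarith [this.2]
    refine mem_iUnion.2 ⟨fun j => ⟨_, hfl j⟩, ⟨hw, fun j => ?_⟩, hwE⟩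
    have h0 := hWa w hw j
    have h1 := Nat.floor_le (div_nonneg (sub_nonneg.2 h0.1.le) hh.le)
    have h2 := Nat.lt_floor_add_one ((removeCoord i w j - a j) / h)
    rw [le_div_iff₀ hh] at h1
    rw [div_lt_iff₀ hh] at h2
    constructor <;> dsimp only <;> linarith
  have hcell : ∀ m, volume (Wm m ∩ E) ≤ b := by
    intro m
    rcases (Wm m).eq_empty_or_nonempty with he | ⟨w, hw⟩
    · simp [he]
    refine (measure_mono ?_).trans (hWb w hw.1)
    rintro x ⟨hx, hxE⟩
    refine ⟨mem_ball.2 (dist_lt_of_forall_abs_sub_le hh fun k => ?_), hxE⟩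
    rcases eq_or_ne k i with rfl | hk
    · simpa [insertCoord] using hWc x hx.1
    · obtain ⟨j, rfl⟩ := Fin.exists_succAbove_eq hk
      have h1 := hx.2 j
      have h2 := hw.2 j
      simp only [insertCoord, Fin.insertNth_apply_succAbove]
      change |removeCoord i x j - removeCoord i w j| ≤ h
      rw [abs_le]
      constructor <;> linarith [h1.1, h1.2, h2.1, h2.2]
  calc volume (W ∩ E) ≤ ∑ m, volume (Wm m ∩ E) :=
        (measure_mono hcov).trans (measure_iUnion_fintype_le _ _)
    _ ≤ ∑ _m : Fin n → Fin N, b := Finset.sum_le_sum fun m _ => hcell m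
    _ = _ := by simp

lemma mul_volume_face_le {n : ℕ} {a : Fin (n + 1) → ℝ} {h : ℝ} (hh : 0 < h) {N : ℕ}
    (hN : 0 < N) {E : Set (Ed (n + 1))} (hE : MeasurableSet E) {i : Fin (n + 1)} {c : ℝ}
    (hc : c = a i ∨ c = a i + N * h) {G : Set (Fin n → ℝ)} {b : ℝ≥0∞}
    (hG : ∀ y ∈ G, ∀ j, y j ∈ Ioo (a (i.succAbove j)) (a (i.succAbove j) + N * h))
    (hGb : ∀ y ∈ G, volume (ball (insertCoord i c y) ((n + 2) * h) ∩ E) ≤ b) :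
    N * (ENNReal.ofReal h * volume G) ≤ N * (N ^ n * b) +
      (N * volume (jumpSet (openBox a (N * h)) E (EuclideanSpace.single i h)) +
        volume (openBox a (N * h) \ E)) := by
  obtain ⟨s, J, hJ, hJv, hs, hJc, hJN, hJd⟩ : ∃ (s : ℝ) (J : Set ℝ), MeasurableSet J ∧
      volume J = ENNReal.ofReal h ∧ (s = h ∨ s = -h) ∧ (∀ t ∈ J, |t - c| ≤ h) ∧
      (∀ k < N, ∀ t ∈ J, t + k * s ∈ Ioo (a i) (a i + N * h)) ∧
      ∀ t ∈ J, ∀ t' ∈ J, |t - t'| < h := by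
    have hk : ∀ k < N, (k : ℝ) * h + h ≤ N * h := fun k hk => by
      have : (k : ℝ) + 1 ≤ N := by exact_mod_cast hk
      nlinarith
    rcases hc with rfl | rfl
    · refine ⟨h, Ioo (a i) (a i + h), measurableSet_Ioo, by simp, .inl rfl, ?_, ?_, ?_⟩
      · rintro t ⟨h1, h2⟩; rw [abs_le]; constructor <;> linarith
      · rintro k hkN t ⟨h1, h2⟩
        have := hk k hkN
        have : 0 ≤ (k : ℝ) * h := by positivity
        constructor <;> linarith
      · rintro t ⟨h1, h2⟩ t' ⟨h3, h4⟩; rw [abs_lt]; constructor <;> linarith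
    · refine ⟨-h, Ioo (a i + N * h - h) (a i + N * h), measurableSet_Ioo, by simp, .inr rfl,
        ?_, ?_, ?_⟩
      · rintro t ⟨h1, h2⟩; rw [abs_le]; constructor <;> linarith
      · rintro k hkN t ⟨h1, h2⟩
        have := hk k hkN
        have : 0 ≤ (k : ℝ) * h := by positivity
        constructor <;> linarith
      · rintro t ⟨h1, h2⟩ t' ⟨h3, h4⟩; rw [abs_lt]; constructor <;> linarith
  set A := openBox a (N * h)
  set v : Ed (n + 1) := EuclideanSpace.single i s
  have hv : ∀ (k : ℕ) (x : Ed (n + 1)) l,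
      (x + k • v) l = x l + if l = i then k * s else 0 := by
    intro k x l
    simp [v, PiLp.single_apply]
  let T : Set (Ed (n + 1)) := {x | x ∈ A ∧ x i ∈ J}
  let W : Set (Ed (n + 1)) := {x | x i ∈ J ∧ removeCoord i x ∈ G}
  have hAm : MeasurableSet A := (isOpen_openBox _ _).measurableSet
  have hT : MeasurableSet T :=
    hAm.inter ((EuclideanSpace.proj i : Ed (n + 1) →L[ℝ] ℝ).continuous.measurable hJ)
  have hWT : W ⊆ T := by
    rintro x ⟨hx, hxG⟩
    refine ⟨fun k => ?_, hx⟩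
    rcases eq_or_ne k i with rfl | hk
    · simpa using hJN 0 hN _ hx
    · obtain ⟨j, rfl⟩ := Fin.exists_succAbove_eq hk
      exact hG _ hxG j
  have hjump : volume (jumpSet A E v) = volume (jumpSet A E (EuclideanSpace.single i h)) := by
    rcases hs with rfl | rfl
    · rfl
    · rw [← volume_jumpSet_neg]
      congr 2
      ext l
      simp [v, PiLp.single_apply]
      split_ifs <;> simp
  have hchain := mul_volume_le_of_disjoint_translates (Z := W \ E) hE hAm hT v N
    (fun k hk x hx l => by
      rw [hv]
      split_ifs with hl
      · subst hl; exact hJN k hk _ hx.2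
      · simpa using hx.1 l)
    (fun k _ l _ x hx y hy hxy => by
      have h1 := congrArg (fun z : Ed (n + 1) => z i) hxy
      simp only [hv, if_true] at h1
      have h2 := hJd _ hx.2 _ hy.2
      have h3 : |(((l : ℤ) - k : ℤ) : ℝ) * s| < h := by
        convert h2 using 2
        push_cast; linarith
      have hsh : |s| = h := by
        rcases hs with rfl | rfl
        · exact abs_of_pos hh
        · rw [abs_neg]; exact abs_of_pos hh
      rw [abs_mul, hsh] at h3
      have h4 : |(((l : ℤ) - k : ℤ) : ℝ)| < 1 := by
        by_contra hcon
        nlinarith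
      have h5 : |(l : ℤ) - k| < 1 := by exact_mod_cast h4
      rw [Int.abs_lt_one_iff] at h5
      omega)
    (sdiff_subset.trans hWT) disjoint_sdiff_left
  have hcells := volume_inter_le_of_cells (i := i) (c := c) (W := W) (E := E) (b := b) hh
    (N := N) (a := fun j => a (i.succAbove j)) (fun w hw => hJc _ hw.1)
    (fun w hw => hG _ hw.2) (fun w hw => hGb _ hw.2)
  rw [← hJv, ← volume_setOf_coord_mem_and i J G]
  calc N * volume W ≤ N * (volume (W ∩ E) + volume (W \ E)) := by
        gcongr; exact (measure_inter_add_sdiff W hE).ge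
    _ ≤ _ := by
        rw [mul_add, ← hjump]
        gcongr

lemma dense_setOf_dyadic (d : ℕ) :
    Dense {z : Ed d | ∃ m : ℕ, ∀ i, ∃ k : ℤ, z i = k * (1 / 2 : ℝ) ^ m} := by
  rw [Metric.dense_iff]
  intro x r hr
  obtain ⟨m, hm⟩ := exists_pow_lt_of_lt_one (div_pos hr (by positivity : (0 : ℝ) < d + 1))
    (by norm_num : (1 / 2 : ℝ) < 1)
  have hpos : (0 : ℝ) < (1 / 2) ^ m := by positivity
  let z : Ed d := WithLp.toLp 2 fun i => (⌊x i / (1 / 2 : ℝ) ^ m⌋ : ℝ) * (1 / 2) ^ m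
  refine ⟨z, ?_, m, fun i => ⟨_, rfl⟩⟩
  have hcoord : ∀ i, |z i - x i| ≤ (1 / 2 : ℝ) ^ m := fun i => by
    have h1 := Int.floor_le (x i / (1 / 2 : ℝ) ^ m)
    have h2 := Int.lt_floor_add_one (x i / (1 / 2 : ℝ) ^ m)
    rw [le_div_iff₀ hpos] at h1
    rw [div_lt_iff₀ hpos] at h2
    rw [abs_le]
    simp only [z]
    constructor <;> linarith
  rw [lt_div_iff₀ (by positivity)] at hm
  refine mem_ball.2 (lt_of_le_of_lt ?_ hm)
  rw [EuclideanSpace.dist_eq]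
  refine Real.sqrt_le_iff.2 ⟨by positivity, ?_⟩
  calc ∑ k, dist (z k) (x k) ^ 2 ≤ ∑ _k : Fin d, ((1 / 2 : ℝ) ^ m) ^ 2 :=
        Finset.sum_le_sum fun k _ => by
          rw [Real.dist_eq]; exact pow_le_pow_left₀ (abs_nonneg _) (hcoord k) 2
    _ = d * ((1 / 2 : ℝ) ^ m) ^ 2 := by simp
    _ ≤ ((1 / 2) ^ m * (d + 1)) ^ 2 := by
        rw [mul_pow, mul_comm]
        gcongr
        nlinarith [(Nat.cast_nonneg d : (0 : ℝ) ≤ d)]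

lemma volume_openBox_diff_le {d : ℕ} {a : Fin d → ℝ} {L : ℝ} (hL : 0 < L) {E : Set (Ed d)}
    (hE : MeasurableSet E) {P : ℝ≥0∞}
    (hP : ∀ m : ℕ, ∑ i, volume (jumpSet (openBox a L) E (EuclideanSpace.single i ((1 / 2) ^ m))) ≤
      ENNReal.ofReal ((1 / 2) ^ m) * P)
    (hdens : volume (openBox a L) / 2 ^ (d + 2) ≤ volume (openBox a L ∩ E)) :
    volume (openBox a L \ E) ≤ 2 ^ d * 2 ^ (d + 2) * (ENNReal.ofReal L * P) := by
  have hc : ∀ z ∈ {z : Ed d | ∃ m : ℕ, ∀ i, ∃ k : ℤ, z i = k * (1 / 2 : ℝ) ^ m},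
      (∀ i, |z i| < L) → volume (jumpSet (openBox a L) E z) ≤ ENNReal.ofReal L * P := by
    rintro z ⟨m, hm⟩ hzL
    choose k hk using hm
    have hpos : (0 : ℝ) < (1 / 2) ^ m := by positivity
    calc volume (jumpSet (openBox a L) E z)
        ≤ ∑ i, volume (jumpSet (openBox a L) E (EuclideanSpace.single i (z i))) :=
          volume_jumpSet_openBox_le a L E z
      _ ≤ ∑ i, ENNReal.ofReal (L / (1 / 2) ^ m) *
            volume (jumpSet (openBox a L) E (EuclideanSpace.single i ((1 / 2) ^ m))) := by
          refine Finset.sum_le_sum fun i _ => ?_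
          have e : (EuclideanSpace.single i (z i) : Ed d) =
              k i • EuclideanSpace.single i ((1 / 2 : ℝ) ^ m) := by
            ext j
            simp only [PiLp.smul_apply, PiLp.single_apply, hk i]
            split_ifs <;> simp
          rw [e]
          refine (volume_jumpSet_zsmul_le (convex_openBox a L) E _ _).trans ?_
          gcongr
          rw [← ENNReal.ofReal_natCast]
          refine ENNReal.ofReal_le_ofReal ?_
          rw [le_div_iff₀ hpos, Nat.cast_natAbs, Int.cast_abs]
          have := (hzL i).le
          rwa [hk i, abs_mul, abs_of_pos hpos] at this
      _ ≤ ENNReal.ofReal (L / (1 / 2) ^ m) * (ENNReal.ofReal ((1 / 2) ^ m) * P) := by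
          rw [← Finset.mul_sum]; gcongr; exact hP m
      _ = ENNReal.ofReal L * P := by
          rw [← mul_assoc, ← ENNReal.ofReal_mul (by positivity), div_mul_cancel₀ _ hpos.ne']
  have h := volume_inter_mul_volume_diff_le hE (dense_setOf_dyadic d) hc
  have hLd0 : ENNReal.ofReal L ^ d ≠ 0 := pow_ne_zero _ (by simpa using hL)
  have hLdt : ENNReal.ofReal L ^ d ≠ ∞ := ENNReal.pow_ne_top ENNReal.ofReal_ne_top
  rw [volume_openBox] at hdens
  have h2 : ENNReal.ofReal L ^ d * volume (openBox a L \ E) ≤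
      ENNReal.ofReal L ^ d * (2 ^ d * 2 ^ (d + 2) * (ENNReal.ofReal L * P)) := by
    calc ENNReal.ofReal L ^ d * volume (openBox a L \ E)
        = 2 ^ (d + 2) * (ENNReal.ofReal L ^ d / 2 ^ (d + 2) * volume (openBox a L \ E)) := by
          rw [← mul_assoc, ENNReal.mul_div_cancel (by simp) (by simp)]
      _ ≤ 2 ^ (d + 2) * (ENNReal.ofReal (2 * L) ^ d * (ENNReal.ofReal L * P)) := by
          exact mul_le_mul' le_rfl ((mul_le_mul' hdens le_rfl).trans h)
      _ = _ := by
          rw [ENNReal.ofReal_mul zero_le_two, mul_pow, ENNReal.ofReal_ofNat]; ring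
  exact (ENNReal.mul_le_mul_iff_right hLd0 hLdt).1 h2

lemma volume_face_le {n : ℕ} {a : Fin (n + 1) → ℝ} {p : ℤ}
    {E : Set (Ed (n + 1))} (hE : MeasurableSet E) {P : ℝ≥0∞}
    (hP : ∀ m : ℕ, ∑ i, volume (jumpSet (openBox a ((2 : ℝ) ^ p)) E
      (EuclideanSpace.single i ((1 / 2) ^ m))) ≤ ENNReal.ofReal ((1 / 2) ^ m) * P)
    (hdens : volume (openBox a ((2 : ℝ) ^ p)) / 2 ^ (n + 1 + 2) ≤
      volume (openBox a ((2 : ℝ) ^ p) ∩ E)) {i : Fin (n + 1)} {c : ℝ}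
    (hc : c = a i ∨ c = a i + (2 : ℝ) ^ p) :
    volume {y : Fin n → ℝ | (∀ j, y j ∈ Ioo (a (i.succAbove j)) (a (i.succAbove j) + (2 : ℝ) ^ p)) ∧
      insertCoord i c y ∉ mtClosure E} ≤ (1 + 2 ^ (n + 1) * 2 ^ (n + 1 + 2)) * P := by
  set L : ℝ := (2 : ℝ) ^ p with hLdef
  have hL : 0 < L := by positivity
  set K : ℝ≥0∞ := 2 ^ (n + 1) * 2 ^ (n + 1 + 2)
  have hdiff : volume (openBox a L \ E) ≤ K * (ENNReal.ofReal L * P) :=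
    volume_openBox_diff_le hL hE hP hdens
  have hunif : ∀ (δ : ℝ) (ε : ℝ≥0∞) (G : Set (Fin n → ℝ)), 0 < δ →
      (∀ y ∈ G, ∀ j, y j ∈ Ioo (a (i.succAbove j)) (a (i.succAbove j) + L)) →
      (∀ y ∈ G, ∀ r, 0 < r → r < δ →
        volume (ball (insertCoord i c y) r ∩ E) ≤ ε * ENNReal.ofReal (r ^ (n + 1))) →
      volume G ≤ ENNReal.ofReal (L ^ n * (n + 2) ^ (n + 1)) * ε + (1 + K) * P := by
    intro δ ε G hδ hG hGb
    obtain ⟨m₀, hm₀⟩ := exists_pow_lt_of_lt_one (div_pos hδ (by positivity : (0 : ℝ) < n + 2))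
      (by norm_num : (1 / 2 : ℝ) < 1)
    let m := m₀ + p.natAbs
    have hm : (1 / 2 : ℝ) ^ m * (n + 2) < δ := by
      rw [← lt_div_iff₀ (by positivity)]
      exact (pow_le_pow_of_le_one (by norm_num) (by norm_num) (by omega)).trans_lt hm₀
    set h : ℝ := (1 / 2) ^ m
    have hh : 0 < h := by positivity
    let N : ℕ := 2 ^ (p + m).toNat
    have hN : 0 < N := by positivity
    have hNh : (N : ℝ) * h = L := by
      simp only [N, h, hLdef]
      push_cast
      rw [← zpow_natCast (2 : ℝ), Int.toNat_of_nonneg (by omega), zpow_add₀ two_ne_zero,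
        zpow_natCast, one_div, inv_pow, mul_assoc, mul_inv_cancel₀ (by positivity), mul_one]
    have hNh' : (N : ℝ≥0∞) * ENNReal.ofReal h = ENNReal.ofReal L := by
      rw [← hNh, ENNReal.ofReal_mul (by positivity), ENNReal.ofReal_natCast]
    have key := mul_volume_face_le (a := a) hh hN hE (i := i) (c := c) (by rwa [hNh]) (G := G)
      (by rwa [hNh]) (b := ε * ENNReal.ofReal (((n + 2) * h) ^ (n + 1)))
      fun y hy => hGb y hy _ (by positivity) (by linarith)
    rw [hNh] at key
    have hj : volume (jumpSet (openBox a L) E (EuclideanSpace.single i h)) ≤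
        ENNReal.ofReal h * P :=
      (Finset.single_le_sum (f := fun i => volume (jumpSet (openBox a L) E
        (EuclideanSpace.single i h))) (fun _ _ => zero_le) (Finset.mem_univ i)).trans (hP m)
    have hL0 : ENNReal.ofReal L ≠ 0 := by simpa using hL
    refine (ENNReal.mul_le_mul_iff_right hL0 ENNReal.ofReal_ne_top).1 ?_
    calc ENNReal.ofReal L * volume G = N * (ENNReal.ofReal h * volume G) := by
          rw [← mul_assoc, hNh']
      _ ≤ _ := key
      _ ≤ N * (N ^ n * (ε * ENNReal.ofReal (((n + 2) * h) ^ (n + 1)))) +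
          (N * (ENNReal.ofReal h * P) + K * (ENNReal.ofReal L * P)) := by gcongr
      _ = _ := by
          have e : (N : ℝ≥0∞) * (N ^ n * (ε * ENNReal.ofReal (((n + 2) * h) ^ (n + 1)))) =
              ENNReal.ofReal L * (ENNReal.ofReal (L ^ n * (n + 2) ^ (n + 1)) * ε) := by
            rw [← ENNReal.ofReal_natCast N, ← ENNReal.ofReal_pow (by positivity), ← mul_assoc,
              ← mul_assoc, ← ENNReal.ofReal_mul (by positivity), mul_right_comm,
              ← ENNReal.ofReal_mul (by positivity), ← mul_assoc,
              ← ENNReal.ofReal_mul (by positivity)]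
            congr 2
            rw [← hNh]; simp only [mul_pow]; ring
          rw [e, ← mul_assoc (N : ℝ≥0∞), hNh']
          ring
  have heps : ∀ ε : ℝ≥0∞, 0 < ε → volume {y : Fin n → ℝ | (∀ j, y j ∈ Ioo (a (i.succAbove j))
      (a (i.succAbove j) + L)) ∧ insertCoord i c y ∉ mtClosure E} ≤
      ENNReal.ofReal (L ^ n * (n + 2) ^ (n + 1)) * ε + (1 + K) * P := by
    intro ε hε
    let G : ℕ → Set (Fin n → ℝ) := fun k =>
      {y | (∀ j, y j ∈ Ioo (a (i.succAbove j)) (a (i.succAbove j) + L)) ∧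
        ∀ r : ℝ, 0 < r → r < 1 / ((k : ℝ) + 1) →
          volume (ball (insertCoord i c y) r ∩ E) ≤ ε * ENNReal.ofReal (r ^ (n + 1))}
    have hmono : Monotone G := fun k l hkl y hy =>
      ⟨hy.1, fun r h0 h1 => hy.2 r h0 (h1.trans_le (by gcongr))⟩
    have hcov : {y : Fin n → ℝ | (∀ j, y j ∈ Ioo (a (i.succAbove j)) (a (i.succAbove j) + L)) ∧
        insertCoord i c y ∉ mtClosure E} ⊆ ⋃ k, G k := by
      rintro y ⟨hy, hmt⟩
      simp only [mtClosure, mem_ofPred_eq, not_lt, nonpos_iff_eq_zero] at hmt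
      have hev := eventually_lt_of_limsup_lt (hmt.trans_lt hε)
      rw [eventually_nhdsWithin_iff, Metric.eventually_nhds_iff] at hev
      obtain ⟨δ, hδ, hev⟩ := hev
      obtain ⟨k, hk⟩ := exists_nat_one_div_lt hδ
      refine mem_iUnion.2 ⟨k, hy, fun r h0 h1 => ?_⟩
      have := hev (y := r) (by rw [Real.dist_eq, sub_zero, abs_of_pos h0]; linarith) h0
      rw [ENNReal.div_lt_iff (.inl (by simpa using pow_pos h0 _)) (.inl ENNReal.ofReal_ne_top)]
        at this
      exact this.le
    refine (measure_mono hcov).trans ?_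
    rw [hmono.measure_iUnion]
    exact iSup_le fun k => hunif _ ε (G k) (by positivity) (fun y hy => hy.1) fun y hy => hy.2
  have hlim : Tendsto (fun ε : ℝ≥0∞ => ENNReal.ofReal (L ^ n * (n + 2) ^ (n + 1)) * ε +
      (1 + K) * P) (𝓝[>] 0) (𝓝 (ENNReal.ofReal (L ^ n * (n + 2) ^ (n + 1)) * 0 + (1 + K) * P)) :=
    ((ENNReal.Tendsto.const_mul tendsto_id (.inr ENNReal.ofReal_ne_top)).add_const _).mono_left
      nhdsWithin_le_nhds
  rw [mul_zero, zero_add] at hlim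
  exact ge_of_tendsto hlim (eventually_nhdsWithin_of_forall heps)

/-- The factor by which `insertCoord` increases the `n`-dimensional measure, at most. -/
def faceConst (n : ℕ) : ℝ≥0∞ :=
  (((Fintype.card (Fin (n + 1)) : NNReal) ^ (1 / (2 : ℝ≥0∞)).toReal : NNReal) : ℝ≥0∞) ^ (n : ℝ)

/-- The dimensional constant of the boundary estimate in a single cube. -/
def boundaryConst (n : ℕ) : ℝ≥0∞ :=
  2 * (n + 1) * (faceConst n * (1 + 2 ^ (n + 1) * 2 ^ (n + 1 + 2)))

lemma boundaryConst_ne_top (n : ℕ) : boundaryConst n ≠ ∞ := by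
  have h2 : ∀ k : ℕ, (2 : ℝ≥0∞) ^ k ≠ ∞ := fun k => ENNReal.pow_ne_top ENNReal.ofNat_ne_top
  refine ENNReal.mul_ne_top (ENNReal.mul_ne_top ENNReal.ofNat_ne_top
    (ENNReal.add_ne_top.2 ⟨ENNReal.natCast_ne_top n, ENNReal.one_ne_top⟩))
    (ENNReal.mul_ne_top (ENNReal.rpow_ne_top_of_nonneg n.cast_nonneg ENNReal.coe_ne_top)
    (ENNReal.add_ne_top.2 ⟨ENNReal.one_ne_top, ENNReal.mul_ne_top (h2 _) (h2 _)⟩))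

lemma hausdorffMeasure_image_insertCoord_le {n : ℕ} (i : Fin (n + 1)) (c : ℝ)
    (S : Set (Fin n → ℝ)) :
    μH[(n : ℝ)] (insertCoord i c '' S) ≤ faceConst n * volume S := by
  have hcard : ((Fintype.card (Fin n) : ℕ) : ℝ) = n := by simp
  rw [← hausdorffMeasure_pi_real (ι := Fin n), hcard]
  have hins : LipschitzWith 1 fun y : Fin n → ℝ => i.insertNth (α := fun _ => ℝ) c y := by
    refine LipschitzWith.of_dist_le_mul fun y z => ?_
    rw [NNReal.coe_one, one_mul, dist_pi_le_iff dist_nonneg]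
    intro k
    rcases eq_or_ne k i with rfl | hk
    · simp
    · obtain ⟨j, rfl⟩ := Fin.exists_succAbove_eq hk
      simpa using dist_le_pi_dist y z j
  exact (((PiLp.lipschitzWith_toLp 2 fun _ : Fin (n + 1) => ℝ).comp hins).weaken
    (by simp)).hausdorffMeasure_image_le n.cast_nonneg S

lemma hausdorffMeasure_boundary_le {n : ℕ} {a : Fin (n + 1) → ℝ} {p : ℤ}
    {E : Set (Ed (n + 1))} (hE : MeasurableSet E) {P : ℝ≥0∞}
    (hP : ∀ m : ℕ, ∑ i, volume (jumpSet (openBox a ((2 : ℝ) ^ p)) E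
      (EuclideanSpace.single i ((1 / 2) ^ m))) ≤ ENNReal.ofReal ((1 / 2) ^ m) * P)
    (hdens : volume (openBox a ((2 : ℝ) ^ p)) / 2 ^ (n + 1 + 2) ≤
      volume (openBox a ((2 : ℝ) ^ p) ∩ E)) {F : Set (Ed (n + 1))}
    (hF : ∀ x ∈ F, (∀ k, x k ∈ Icc (a k) (a k + (2 : ℝ) ^ p)) ∧
      ∃ i, x i = a i ∨ x i = a i + (2 : ℝ) ^ p) :
    μH[(n : ℝ)] (F \ mtClosure E) ≤ boundaryConst n * P := by
  set L : ℝ := (2 : ℝ) ^ p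
  let S : Fin (n + 1) → ℝ → Set (Fin n → ℝ) := fun i c =>
    {y | (∀ j, y j ∈ Icc (a (i.succAbove j)) (a (i.succAbove j) + L)) ∧
      insertCoord i c y ∉ mtClosure E}
  have hS : ∀ i c, (c = a i ∨ c = a i + L) →
      μH[(n : ℝ)] (insertCoord i c '' S i c) ≤
        faceConst n * ((1 + 2 ^ (n + 1) * 2 ^ (n + 1 + 2)) * P) := by
    intro i c hc
    refine (hausdorffMeasure_image_insertCoord_le i c _).trans ?_
    gcongr
    refine le_trans ?_ (volume_face_le hE hP hdens hc)
    refine measure_mono_ae ?_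
    have hae := Measure.univ_pi_Ioo_ae_eq_Icc (μ := fun _ : Fin n => (volume : Measure ℝ))
      (f := fun j => a (i.succAbove j)) (g := fun j => a (i.succAbove j) + L)
    filter_upwards [hae.mem_iff] with y hy hyS
    exact ⟨fun j => hy.2 ⟨fun j => (hyS.1 j).1, fun j => (hyS.1 j).2⟩ j (mem_univ j), hyS.2⟩
  have hcov : F \ mtClosure E ⊆ ⋃ i, (insertCoord i (a i) '' S i (a i) ∪
      insertCoord i (a i + L) '' S i (a i + L)) := by
    rintro x ⟨hx, hxE⟩
    obtain ⟨hbox, i, hi⟩ := hF x hx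
    refine mem_iUnion.2 ⟨i, ?_⟩
    have hmem : ∀ c, x i = c → x ∈ insertCoord i c '' S i c := by
      rintro c rfl
      refine ⟨removeCoord i x, ⟨fun j => hbox _, ?_⟩, insertCoord_removeCoord i x⟩
      rwa [insertCoord_removeCoord]
    exact hi.imp (hmem _) (hmem _)
  calc μH[(n : ℝ)] (F \ mtClosure E)
      ≤ ∑ i, (μH[(n : ℝ)] (insertCoord i (a i) '' S i (a i)) +
          μH[(n : ℝ)] (insertCoord i (a i + L) '' S i (a i + L))) :=
        (measure_mono hcov).trans ((measure_iUnion_fintype_le _ _).trans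
          (Finset.sum_le_sum fun i _ => measure_union_le _ _))
    _ ≤ ∑ _i : Fin (n + 1), (faceConst n * ((1 + 2 ^ (n + 1) * 2 ^ (n + 1 + 2)) * P) +
          faceConst n * ((1 + 2 ^ (n + 1) * 2 ^ (n + 1 + 2)) * P)) :=
        Finset.sum_le_sum fun i _ => add_le_add (hS i _ (.inl rfl)) (hS i _ (.inr rfl))
    _ = boundaryConst n * P := by
        simp only [Finset.sum_const, Finset.card_univ, Fintype.card_fin, nsmul_eq_mul,
          boundaryConst]
        push_cast
        ring

lemma exists_contDiff_bump {d : ℕ} {K O : Set (Ed d)} (hK : IsCompact K) (hO : IsOpen O)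
    (hKO : K ⊆ O) : ∃ ψ : Ed d → ℝ, ContDiff ℝ 1 ψ ∧ HasCompactSupport ψ ∧ tsupport ψ ⊆ O ∧
      (∀ x ∈ K, ψ x = 1) ∧ ∀ x, ψ x ∈ Icc (0 : ℝ) 1 := by
  obtain ⟨K', hK', h1, h2⟩ := exists_compact_between hK hO hKO
  obtain ⟨ψ, h0, hone, h01⟩ := exists_contMDiffMap_zero_one_of_isClosed (n := 1)
    (modelWithCornersSelf ℝ (Ed d)) (s := (interior K')ᶜ) (t := K) isOpen_interior.isClosed_compl
    hK.isClosed (Set.disjoint_left.2 fun x hx hxK => hx (h1 hxK))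
  have hsupp : tsupport ψ ⊆ K' := closure_minimal (fun x hx => by
    by_contra hxK
    exact hx (h0 fun h => hxK (interior_subset h))) hK'.isClosed
  exact ⟨ψ, ψ.contMDiff.contDiff, hK'.of_isClosed_subset (isClosed_tsupport _) hsupp,
    hsupp.trans h2, fun x hx => hone hx, h01⟩

lemma exists_contDiff_integral_mul_ge {d : ℕ} {V : Set (Ed d)} (hV : IsOpen V) {g : Ed d → ℝ}
    (hg : IntegrableOn g V) {ε : ℝ} (hε : 0 < ε) :
    ∃ ψ : Ed d → ℝ, ContDiff ℝ 1 ψ ∧ HasCompactSupport ψ ∧ tsupport ψ ⊆ V ∧ (∀ x, |ψ x| ≤ 1) ∧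
      ∫ x in V, |g x| ≤ (∫ x in V, g x * ψ x) + ε := by
  wlog hgm : StronglyMeasurable g generalizing g
  · obtain ⟨ψ, h1, h2, h3, h4, h5⟩ := this (hg.congr hg.1.ae_eq_mk) hg.1.stronglyMeasurable_mk
    refine ⟨ψ, h1, h2, h3, h4, ?_⟩
    have e (ψ : Ed d → ℝ) : ∫ x in V, g x * ψ x = ∫ x in V, hg.1.mk g x * ψ x :=
      integral_congr_ae (by filter_upwards [hg.1.ae_eq_mk] with x hx; rw [← hx])
    have e' : ∫ x in V, |g x| = ∫ x in V, |hg.1.mk g x| :=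
      integral_congr_ae (by filter_upwards [hg.1.ae_eq_mk] with x hx; rw [← hx])
    rw [e, e']
    exact h5
  let ν : Measure (Ed d) := (volume.restrict V).withDensity fun x => ‖g x‖ₑ
  have hνfin : IsFiniteMeasure ν := isFiniteMeasure_withDensity hg.2.ne
  have hPm : MeasurableSet {x | x ∈ V ∧ 0 < g x} :=
    hV.measurableSet.inter (measurableSet_lt measurable_const hgm.measurable)
  have hNm : MeasurableSet {x | x ∈ V ∧ g x < 0} :=
    hV.measurableSet.inter (measurableSet_lt hgm.measurable measurable_const)
  have hε4 : ENNReal.ofReal (ε / 4) ≠ 0 := by simpa using hε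
  obtain ⟨Kp, hKpP, hKp, hKpν⟩ := hPm.exists_isCompact_sdiff_lt (measure_ne_top ν _) hε4
  obtain ⟨Kn, hKnN, hKn, hKnν⟩ := hNm.exists_isCompact_sdiff_lt (measure_ne_top ν _) hε4
  have hdisj : Disjoint Kp Kn := Set.disjoint_left.2 fun x hx hx' =>
    lt_asymm (hKpP hx).2 (hKnN hx').2
  obtain ⟨Op, On, hOp, hOn, hKOp, hKOn, hO⟩ :=
    SeparatedNhds.of_isCompact_isCompact hKp hKn hdisj
  obtain ⟨p, p1, p2, p3, p4, p5⟩ := exists_contDiff_bump hKp (hOp.inter hV)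
    (subset_inter hKOp fun x hx => (hKpP hx).1)
  obtain ⟨q, q1, q2, q3, q4, q5⟩ := exists_contDiff_bump hKn (hOn.inter hV)
    (subset_inter hKOn fun x hx => (hKnN hx).1)
  have hp0 : ∀ x ∈ Kn, p x = 0 := fun x hx => by
    by_contra h
    exact Set.disjoint_left.1 hO (p3 (subset_tsupport _ h)).1 (hKOn hx)
  have hq0 : ∀ x ∈ Kp, q x = 0 := fun x hx => by
    by_contra h
    exact Set.disjoint_left.1 hO (hKOp hx) (q3 (subset_tsupport _ h)).1
  have hψ1 : ∀ x, |p x - q x| ≤ 1 := fun x => by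
    rw [abs_le]
    constructor <;> linarith [(p5 x).1, (p5 x).2, (q5 x).1, (q5 x).2]
  refine ⟨p - q, p1.sub q1, p2.sub q2,
    (tsupport_sub _ _).trans (union_subset (p3.trans inter_subset_right)
      (q3.trans inter_subset_right)), hψ1, ?_⟩
  let Bad := ({x | x ∈ V ∧ 0 < g x} \ Kp) ∪ ({x | x ∈ V ∧ g x < 0} \ Kn)
  have hBad : MeasurableSet Bad := (hPm.diff hKp.measurableSet).union (hNm.diff hKn.measurableSet)
  have hgψ : IntegrableOn (fun x => g x * (p - q) x) V :=
    hg.mul_bdd (c := 1) (p1.sub q1).continuous.aestronglyMeasurable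
      (Eventually.of_forall fun x => hψ1 x)
  have hgabs : IntegrableOn (fun x => |g x|) V := hg.abs
  have hpt : ∀ x ∈ V, |g x| - g x * (p - q) x ≤ Bad.indicator (fun x => 2 * |g x|) x := by
    intro x hxV
    by_cases hx : x ∈ Bad
    · rw [indicator_of_mem hx]
      have : -(g x * (p - q) x) ≤ |g x| * 1 := (neg_le_abs _).trans (by
        rw [abs_mul]; exact mul_le_mul_of_nonneg_left (hψ1 x) (abs_nonneg _))
      linarith
    · rw [indicator_of_notMem hx]
      simp only [Bad, mem_union, Set.mem_sdiff, mem_ofPred_eq, not_or, not_and, not_not] at hx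
      rcases lt_trichotomy (g x) 0 with h | h | h
      · have hk := hx.2 ⟨hxV, h⟩
        simp [abs_of_neg h, q4 x hk, hp0 x hk]
      · simp [h]
      · have hk := hx.1 ⟨hxV, h⟩
        simp [abs_of_pos h, p4 x hk, hq0 x hk]
  have hBadint : ∫ x in V, Bad.indicator (fun x => 2 * |g x|) x ≤ ε := by
    rw [integral_indicator hBad, integral_const_mul]
    have hν : ν Bad ≤ ENNReal.ofReal (ε / 4) + ENNReal.ofReal (ε / 4) :=
      (measure_union_le _ _).trans (add_le_add hKpν.le hKnν.le)
    rw [← ENNReal.ofReal_add (by positivity) (by positivity)] at hν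
    have : ∫ x in Bad, |g x| ∂volume.restrict V = (ν Bad).toReal := by
      rw [withDensity_apply _ hBad, integral_eq_lintegral_of_nonneg_ae
        (Eventually.of_forall fun _ => abs_nonneg _)
        hgm.measurable.abs.aestronglyMeasurable]
      congr 1
      refine lintegral_congr fun x => ?_
      rw [Real.enorm_eq_ofReal_abs]
    rw [this]
    have := ENNReal.toReal_le_of_le_ofReal (by positivity) hν
    linarith
  have hmain : ∫ x in V, (|g x| - g x * (p - q) x) ≤
      ∫ x in V, Bad.indicator (fun x => 2 * |g x|) x :=
    setIntegral_mono_on (hgabs.sub hgψ) ((hgabs.const_mul 2).indicator hBad) hV.measurableSet hpt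
  rw [integral_sub hgabs hgψ] at hmain
  linarith

/-- Minus the average of `ψ` over the segment from `x` to `x - h e_i`. -/
def segmentAverage {d : ℕ} (ψ : Ed d → ℝ) (i : Fin d) (h : ℝ) (x : Ed d) : ℝ :=
  -(h⁻¹ * ∫ s in (0:ℝ)..h, ψ (x - EuclideanSpace.single i s))

lemma continuous_euclideanSpace_single {d : ℕ} (i : Fin d) :
    Continuous fun s : ℝ => (EuclideanSpace.single i s : Ed d) := by
  have : (fun s : ℝ => (EuclideanSpace.single i s : Ed d)) =
      fun s => s • EuclideanSpace.single i (1:ℝ) := by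
    ext s j
    by_cases hj : j = i <;> simp [hj]
  rw [this]
  fun_prop

lemma hasFDerivAt_segmentAverage {d : ℕ} {ψ : Ed d → ℝ} (hψ : ContDiff ℝ 1 ψ)
    (hc : HasCompactSupport ψ) (i : Fin d) (h : ℝ) (x : Ed d) :
    HasFDerivAt (segmentAverage ψ i h)
      (-(h⁻¹ • ∫ s in (0:ℝ)..h, fderiv ℝ ψ (x - EuclideanSpace.single i s))) x := by
  have hdc : Continuous (fderiv ℝ ψ) := hψ.continuous_fderiv one_ne_zero
  obtain ⟨M, hM⟩ := hdc.bounded_above_of_compact_support (hc.fderiv (𝕜 := ℝ))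
  have hs := continuous_euclideanSpace_single i
  have key := intervalIntegral.hasFDerivAt_integral_of_dominated_of_fderiv_le (𝕜 := ℝ)
    (μ := volume) (a := 0) (b := h) (s := univ) (x₀ := x) (bound := fun _ => M)
    (F := fun x s => ψ (x - EuclideanSpace.single i s))
    (F' := fun x s => fderiv ℝ ψ (x - EuclideanSpace.single i s)) univ_mem
    (Eventually.of_forall fun y =>
      (hψ.continuous.comp (continuous_const.sub hs)).aestronglyMeasurable)
    ((hψ.continuous.comp (continuous_const.sub hs)).intervalIntegrable _ _)
    (hdc.comp (continuous_const.sub hs)).aestronglyMeasurable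
    (Eventually.of_forall fun s _ y _ => hM _) intervalIntegrable_const
    (Eventually.of_forall fun s _ y _ =>
      (hasFDerivAt_comp_sub (EuclideanSpace.single i s)).2
        (hψ.differentiable one_ne_zero _).hasFDerivAt)
  exact ((key.const_smul h⁻¹).neg :)

lemma contDiff_segmentAverage {d : ℕ} {ψ : Ed d → ℝ} (hψ : ContDiff ℝ 1 ψ)
    (hc : HasCompactSupport ψ) (i : Fin d) (h : ℝ) : ContDiff ℝ 1 (segmentAverage ψ i h) := by
  have hdc : Continuous (fderiv ℝ ψ) := hψ.continuous_fderiv one_ne_zero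
  have hd := hasFDerivAt_segmentAverage hψ hc i h
  rw [contDiff_one_iff_fderiv]
  refine ⟨fun x => (hd x).differentiableAt, ?_⟩
  rw [funext fun x => (hd x).fderiv]
  refine continuous_neg.comp ((continuous_const_smul h⁻¹).comp ?_)
  refine intervalIntegral.continuous_parametric_intervalIntegral_of_continuous'
    (f := fun (x : Ed d) (s : ℝ) => fderiv ℝ ψ (x - EuclideanSpace.single i s)) ?_ _ _
  exact hdc.comp (continuous_fst.sub ((continuous_euclideanSpace_single i).comp continuous_snd))

lemma fderiv_segmentAverage_single {d : ℕ} {ψ : Ed d → ℝ} (hψ : ContDiff ℝ 1 ψ)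
    (hc : HasCompactSupport ψ) (i : Fin d) (h : ℝ) (x : Ed d) :
    fderiv ℝ (segmentAverage ψ i h) x (EuclideanSpace.single i 1) =
      h⁻¹ * (ψ (x - EuclideanSpace.single i h) - ψ x) := by
  have hdc : Continuous (fderiv ℝ ψ) := hψ.continuous_fderiv one_ne_zero
  have hs := continuous_euclideanSpace_single i
  have hd (s : ℝ) : HasDerivAt (fun s => ψ (x - EuclideanSpace.single i s))
      (-(fderiv ℝ ψ (x - EuclideanSpace.single i s) (EuclideanSpace.single i 1))) s := by
    have e : (fun s : ℝ => x - (EuclideanSpace.single i s : Ed d)) =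
        fun s => x - s • EuclideanSpace.single i (1:ℝ) := by
      ext s j
      by_cases hj : j = i <;> simp [hj]
    have h1 : HasDerivAt (fun s : ℝ => x - (EuclideanSpace.single i s : Ed d))
        (-(EuclideanSpace.single i (1:ℝ))) s := by
      rw [e]
      simpa using ((hasDerivAt_id s).smul_const (EuclideanSpace.single i (1:ℝ) : Ed d)).const_sub x
    have hdiff := hψ.differentiable one_ne_zero (x - EuclideanSpace.single i s)
    have := hdiff.hasFDerivAt.comp_hasDerivAt s h1
    rw [map_neg] at this
    exact this
  have hcont : Continuous fun s => fderiv ℝ ψ (x - EuclideanSpace.single i s) :=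
    hdc.comp (continuous_const.sub hs)
  have hftc := intervalIntegral.integral_eq_sub_of_hasDerivAt (a := 0) (b := h)
    (fun s _ => hd s) ((hcont.clm_apply continuous_const).neg.intervalIntegrable _ _)
  rw [intervalIntegral.integral_neg] at hftc
  have hz : (EuclideanSpace.single i (0:ℝ) : Ed d) = 0 := by
    ext j; by_cases hj : j = i <;> simp [hj]
  rw [hz, sub_zero] at hftc
  rw [(hasFDerivAt_segmentAverage hψ hc i h x).fderiv, ← hftc]
  simp only [neg_apply, smul_apply, smul_eq_mul]
  rw [← ContinuousLinearMap.intervalIntegral_apply (hcont.intervalIntegrable _ _)]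
  ring

lemma abs_segmentAverage_le {d : ℕ} {ψ : Ed d → ℝ} (hψ : ∀ x, |ψ x| ≤ 1) (i : Fin d) {h : ℝ}
    (hh : 0 < h) (x : Ed d) : |segmentAverage ψ i h x| ≤ 1 := by
  have := intervalIntegral.norm_integral_le_of_norm_le_const (a := 0) (b := h) (C := 1)
    (f := fun s => ψ (x - EuclideanSpace.single i s)) fun s _ => hψ _
  rw [segmentAverage, abs_neg, abs_mul, abs_of_pos (inv_pos.2 hh)]
  rw [sub_zero, abs_of_pos hh, one_mul, Real.norm_eq_abs] at this
  calc _ ≤ h⁻¹ * h := by gcongr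
    _ = 1 := inv_mul_cancel₀ hh.ne'

lemma exists_isCompact_segmentAverage_eq_zero {d : ℕ} {ψ : Ed d → ℝ} {U : Set (Ed d)} (i : Fin d)
    {h : ℝ} (hh : 0 < h) (hc : HasCompactSupport ψ)
    (hU : ∀ x ∈ tsupport ψ, ∀ s ∈ Icc 0 h, x + EuclideanSpace.single i s ∈ U) :
    ∃ K ⊆ U, IsCompact K ∧ ∀ x ∉ K, segmentAverage ψ i h x = 0 := by
  refine ⟨(fun q : Ed d × ℝ => q.1 + EuclideanSpace.single i q.2) '' (tsupport ψ ×ˢ Icc 0 h),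
    ?_, ?_, fun x hx => ?_⟩
  · rintro _ ⟨⟨y, s⟩, ⟨hy, hs⟩, rfl⟩
    exact hU y hy s hs
  · exact (hc.isCompact.prod isCompact_Icc).image
      (continuous_fst.add ((continuous_euclideanSpace_single i).comp continuous_snd))
  · rw [segmentAverage, intervalIntegral.integral_congr (g := fun _ => (0:ℝ)) fun s hs => ?_]
    · simp
    · rw [uIcc_of_le hh.le] at hs
      by_contra hne
      exact hx ⟨(x - EuclideanSpace.single i s, s), ⟨subset_tsupport _ hne, hs⟩, by simp⟩

lemma lintegral_translate_sub_le_var {d : ℕ} {U V : Set (Ed d)} (hV : IsOpen V)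
    (i : Fin d) {h : ℝ} (hh : 0 < h)
    (hVU : ∀ x ∈ V, ∀ s ∈ Icc 0 h, x + EuclideanSpace.single i s ∈ U) {f : Ed d → ℝ}
    (hf : IntegrableOn f U) :
    ∫⁻ x in V, ‖f (x + EuclideanSpace.single i h) - f x‖ₑ ≤ ENNReal.ofReal h * var U f := by
  have hz : (EuclideanSpace.single i (0:ℝ) : Ed d) = 0 := by
    ext j; by_cases hj : j = i <;> simp [hj]
  have hVU0 : V ⊆ U := fun x hx => by simpa [hz] using hVU x hx 0 ⟨le_rfl, hh.le⟩
  set v : Ed d := EuclideanSpace.single i h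
  have hfV : IntegrableOn f V := hf.mono_set hVU0
  have hfv : IntegrableOn (fun x => f (x + v)) V := by
    have := ((measurePreserving_add_right volume v).integrableOn_comp_preimage
      (Homeomorph.addRight v).measurableEmbedding (f := f) (s := U)).2 hf
    exact this.mono_set fun x hx => hVU x hx h ⟨hh.le, le_rfl⟩
  set g : Ed d → ℝ := fun x => f (x + v) - f x
  have hg : IntegrableOn g V := hfv.sub hfV
  have key (ε : ℝ) (hε : 0 < ε) :
      ∫⁻ x in V, ‖g x‖ₑ ≤ ENNReal.ofReal h * var U f + ENNReal.ofReal ε := by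
    obtain ⟨ψ, hψ, hc, hsV, hψ1, hint⟩ := exists_contDiff_integral_mul_ge hV hg hε
    obtain ⟨K, hKU, hK, hK0⟩ := exists_isCompact_segmentAverage_eq_zero (U := U) i hh hc
      fun x hx => hVU x (hsV hx)
    set a := segmentAverage ψ i h
    have hac : ContDiff ℝ 1 a := contDiff_segmentAverage hψ hc i h
    let φ : Ed d → Ed d := fun x => a x • EuclideanSpace.single i 1
    have hφK : tsupport φ ⊆ K := closure_minimal (fun x hx => by
      by_contra hxK
      exact hx (by simp [φ, hK0 x hxK])) hK.isClosed
    have hdiv (x) : divergence φ x = h⁻¹ * (ψ (x - v) - ψ x) := by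
      have hfd : fderiv ℝ φ x = (fderiv ℝ a x).smulRight (EuclideanSpace.single i 1) :=
        ((hac.differentiable one_ne_zero x).hasFDerivAt.smul_const _).fderiv
      rw [← fderiv_segmentAverage_single hψ hc i h x, divergence, hfd,
        Finset.sum_eq_single i (fun j _ hj => by simp [hj]) (by simp)]
      simp [a]
    have hvar : ENNReal.ofReal (∫ x in U, f x * divergence φ x) ≤ var U f :=
      le_iSup₂ (f := fun (φ : Ed d → Ed d) (_ : φ ∈ {φ : Ed d → Ed d | ContDiff ℝ 1 φ ∧
        HasCompactSupport φ ∧ tsupport φ ⊆ U ∧ ∀ x, ‖φ x‖ ≤ 1}) =>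
        ENNReal.ofReal (∫ x in U, f x * divergence φ x)) φ
        ⟨hac.smul contDiff_const, hK.of_isClosed_subset (isClosed_tsupport _) hφK,
          hφK.trans hKU, fun x => by
            simpa [φ, norm_smul] using abs_segmentAverage_le hψ1 i hh x⟩
    have hψ0 (x) (hx : x ∉ V) : ψ x = 0 := image_eq_zero_of_notMem_tsupport fun h => hx (hsV h)
    have hi1 : IntegrableOn (fun x => f (x + v) * ψ x) V :=
      hfv.mul_bdd (c := 1) hψ.continuous.aestronglyMeasurable (Eventually.of_forall fun x => hψ1 x)
    have hi2 : IntegrableOn (fun x => f x * ψ x) V :=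
      hfV.mul_bdd (c := 1) hψ.continuous.aestronglyMeasurable (Eventually.of_forall fun x => hψ1 x)
    have hi3 : IntegrableOn (fun x => f x * ψ x) U :=
      hf.mul_bdd (c := 1) hψ.continuous.aestronglyMeasurable (Eventually.of_forall fun x => hψ1 x)
    have hi4 : IntegrableOn (fun x => f x * ψ (x - v)) U :=
      hf.mul_bdd (c := 1)
        (hψ.continuous.comp (continuous_id.sub continuous_const)).aestronglyMeasurable
        (Eventually.of_forall fun x => hψ1 _)
    have e1 : ∫ x in V, f (x + v) * ψ x = ∫ x in U, f x * ψ (x - v) := by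
      rw [setIntegral_eq_integral_of_forall_compl_eq_zero fun x hx => by simp [hψ0 x hx],
        setIntegral_eq_integral_of_forall_compl_eq_zero fun x hx => ?_,
        ← integral_add_right_eq_self (fun x => f x * ψ (x - v)) v]
      · simp
      · rw [hψ0 (x - v) fun hxv => hx ?_, mul_zero]
        simpa [v] using hVU _ hxv h ⟨hh.le, le_rfl⟩
    have e2 : ∫ x in V, f x * ψ x = ∫ x in U, f x * ψ x := by
      rw [setIntegral_eq_integral_of_forall_compl_eq_zero fun x hx => by simp [hψ0 x hx],
        setIntegral_eq_integral_of_forall_compl_eq_zero fun x hx => by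
          simp [hψ0 x fun h => hx (hVU0 h)]]
    have e3 : ∫ x in V, g x * ψ x = h * ∫ x in U, f x * divergence φ x := by
      simp only [g, sub_mul, hdiv]
      rw [integral_sub hi1 hi2, e1, e2, ← integral_sub hi4 hi3, ← integral_const_mul]
      congr 1
      ext x
      field_simp
    have e4 : ∫⁻ x in V, ‖g x‖ₑ = ENNReal.ofReal (∫ x in V, |g x|) :=
      (ofReal_integral_norm_eq_lintegral_enorm hg).symm
    rw [e4]
    calc _ ≤ ENNReal.ofReal (h * (∫ x in U, f x * divergence φ x) + ε) :=
          ENNReal.ofReal_le_ofReal (by rwa [← e3])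
      _ ≤ _ := ENNReal.ofReal_add_le
      _ ≤ _ := by
        rw [ENNReal.ofReal_mul hh.le]
        gcongr
  refine ENNReal.le_of_forall_pos_le_add fun ε hε _ => ?_
  have := key ε hε
  rwa [ENNReal.ofReal_coe_nnreal] at this

lemma measurableSet_setOf_jump {d : ℕ} {V : Set (Ed d)} (hV : MeasurableSet V) {f : Ed d → ℝ}
    (hf : Measurable f) (v : Ed d) :
    MeasurableSet {q : ℝ × Ed d | q.2 ∈ V ∧ ¬(q.1 < f q.2 ↔ q.1 < f (q.2 + v))} := by
  refine (measurable_snd hV).inter (MeasurableSet.compl ?_)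
  exact (measurableSet_lt measurable_fst (hf.comp measurable_snd)).iff
    (measurableSet_lt measurable_fst (hf.comp (measurable_snd.add_const v)))

lemma lintegral_volume_jump {d : ℕ} {V : Set (Ed d)} (hV : MeasurableSet V) {f : Ed d → ℝ}
    (hf : Measurable f) (v : Ed d) :
    ∫⁻ lam : ℝ, volume {x | x ∈ V ∧ ¬(lam < f x ↔ lam < f (x + v))} =
      ∫⁻ x in V, ‖f (x + v) - f x‖ₑ := by
  have hS := measurableSet_setOf_jump hV hf v
  have e1 := Measure.prod_apply (μ := (volume : Measure ℝ)) (ν := (volume : Measure (Ed d))) hS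
  have e2 := Measure.prod_apply_symm (μ := (volume : Measure ℝ)) (ν := (volume : Measure (Ed d))) hS
  rw [← lintegral_indicator hV]
  refine (e1.symm.trans e2).trans (lintegral_congr fun x => ?_)
  by_cases hx : x ∈ V
  · rw [indicator_of_mem hx]
    have : (fun lam : ℝ => (lam, x)) ⁻¹'
        {q : ℝ × Ed d | q.2 ∈ V ∧ ¬(q.1 < f q.2 ↔ q.1 < f (q.2 + v))} =
        Ico (min (f x) (f (x + v))) (max (f x) (f (x + v))) := by
      ext lam
      simp only [mem_preimage, mem_ofPred_eq, hx, true_and, mem_Ico, min_le_iff, lt_max_iff]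
      grind
    rw [this, Real.volume_Ico, max_sub_min_eq_abs', Real.enorm_eq_ofReal_abs, abs_sub_comm]
  · rw [indicator_of_notMem hx]
    simp [hx]

lemma var_congr {d : ℕ} {U : Set (Ed d)} {f g : Ed d → ℝ}
    (hfg : f =ᵐ[volume.restrict U] g) : var U f = var U g := by
  have e (φ : Ed d → Ed d) : ∫ x in U, f x * divergence φ x = ∫ x in U, g x * divergence φ x :=
    integral_congr_ae (by filter_upwards [hfg] with x hx; rw [hx])
  simp only [var, e]

lemma mtClosure_mono_ae {d : ℕ} {E F : Set (Ed d)} (h : E ≤ᵐ[volume] F) :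
    mtClosure E ⊆ mtClosure F := by
  intro x hx
  rw [mtClosure, mem_ofPred_eq] at hx ⊢
  refine hx.trans_le (limsup_le_limsup (Eventually.of_forall fun r => ?_))
  refine ENNReal.div_le_div_right (measure_mono_ae ?_) _
  filter_upwards [h] with y hy hyE
  exact ⟨hyE.1, hy hyE.2⟩

lemma interior_setOf_Ico {d : ℕ} (a b : Fin d → ℝ) :
    interior {x : Ed d | ∀ i, x i ∈ Ico (a i) (b i)} = {x | ∀ i, x i ∈ Ioo (a i) (b i)} := by
  have h1 : {x : Ed d | ∀ i, x i ∈ Ico (a i) (b i)} =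
      ⋂ i, (EuclideanSpace.proj i : Ed d →L[ℝ] ℝ) ⁻¹' Ico (a i) (b i) := by
    ext x; simp
  have hsurj (i : Fin d) : Function.Surjective (EuclideanSpace.proj i : Ed d →L[ℝ] ℝ) :=
    fun t => ⟨EuclideanSpace.single i t, by simp⟩
  rw [h1, interior_iInter_of_finite]
  ext x
  simp only [mem_iInter, mem_ofPred_eq]
  refine forall_congr' fun i => ?_
  rw [← ((EuclideanSpace.proj i : Ed d →L[ℝ] ℝ).isOpenMap
    (hsurj i)).preimage_interior_eq_interior_preimage (ContinuousLinearMap.continuous _),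
    interior_Ico]
  simp

lemma volume_setOf_Ico {d : ℕ} (a : Fin d → ℝ) (L : ℝ) :
    volume {x : Ed d | ∀ i, x i ∈ Ico (a i) (a i + L)} = ENNReal.ofReal L ^ d := by
  have h := (EuclideanSpace.volume_preserving_symm_measurableEquiv_toLp (Fin d)).measure_preimage
    (s := univ.pi fun i => Ico (a i) (a i + L))
    (MeasurableSet.univ_pi fun _ => measurableSet_Ico).nullMeasurableSet
  rw [Real.volume_pi_Ico] at h
  simp only [add_sub_cancel_left, Finset.prod_const, Finset.card_univ, Fintype.card_fin] at h
  rw [← h]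
  congr 1
  ext x
  simp

lemma IsDyadicCube.exists_eq {d : ℕ} {Q : Set (Ed d)} (hQ : IsDyadicCube Q) :
    ∃ (a : Fin d → ℝ) (p : ℤ), Q = {x : Ed d | ∀ i, x i ∈ Ico (a i) (a i + (2:ℝ)^p)} := by
  obtain ⟨p, m, rfl⟩ := hQ
  exact ⟨fun i => (2:ℝ)^p * m i, p, by simp only [mul_add, mul_one]⟩

lemma IsDyadicCube.interior_ae_eq {d : ℕ} {Q : Set (Ed d)} (hQ : IsDyadicCube Q) :
    interior Q =ᵐ[volume] Q := by
  obtain ⟨a, p, rfl⟩ := hQ.exists_eq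
  refine ae_eq_of_subset_of_measure_ge interior_subset ?_
    isOpen_interior.measurableSet.nullMeasurableSet ?_
  · rw [interior_setOf_Ico, volume_setOf_Ico]
    exact (volume_openBox a _).ge
  · rw [volume_setOf_Ico]
    exact ENNReal.pow_ne_top ENNReal.ofReal_ne_top

lemma IsDyadicCube.subset_or_subset {d : ℕ} {P Q : Set (Ed d)} (hP : IsDyadicCube P)
    (hQ : IsDyadicCube Q) {x : Ed d} (hxP : x ∈ P) (hxQ : x ∈ Q) : P ⊆ Q ∨ Q ⊆ P := by
  obtain ⟨p, m, rfl⟩ := hP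
  obtain ⟨q, k, rfl⟩ := hQ
  wlog hpq : p ≤ q generalizing p q m k
  · exact (this q k hxQ p m hxP (le_of_not_ge hpq)).symm
  left
  obtain ⟨N, rfl⟩ := Int.le.dest hpq
  have h2 : (0:ℝ) < 2 ^ p := by positivity
  intro y hy i
  have hx1 := hxP i
  have hx2 := hxQ i
  have hy1 := hy i
  rw [zpow_add₀ two_ne_zero, zpow_natCast] at hx2 ⊢
  have a1 : (2:ℤ) ^ N * k i < m i + 1 := by
    have : (2:ℝ) ^ p * (2 ^ N * k i) < 2 ^ p * (m i + 1) := by linarith [hx1.2, hx2.1]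
    exact_mod_cast lt_of_mul_lt_mul_left this h2.le
  have a2 : m i < (2:ℤ) ^ N * (k i + 1) := by
    have : (2:ℝ) ^ p * m i < 2 ^ p * (2 ^ N * (k i + 1)) := by linarith [hx1.1, hx2.2]
    exact_mod_cast lt_of_mul_lt_mul_left this h2.le
  have b1 : (2:ℝ) ^ N * k i ≤ m i := by exact_mod_cast Int.lt_add_one_iff.1 a1
  have b2 : (m i : ℝ) + 1 ≤ 2 ^ N * (k i + 1) := by exact_mod_cast Int.add_one_le_iff.2 a2
  have c1 := mul_le_mul_of_nonneg_left b1 h2.le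
  have c2 := mul_le_mul_of_nonneg_left b2 h2.le
  exact ⟨by linarith [hy1.1], by linarith [hy1.2]⟩

/-- The difference quotients of the super-level set `{g > lam}` in the interior of `Q` at scale
`2^(-m)`. -/
def scaledJump {d : ℕ} (g : Ed d → ℝ) (Q : Set (Ed d)) (m : ℕ) (lam : ℝ) : ℝ≥0∞ :=
  2 ^ m * ∑ i, volume (jumpSet (interior Q) {x | lam < g x} (EuclideanSpace.single i ((1/2)^m)))

lemma two_pow_mul_ofReal (m : ℕ) : (2:ℝ≥0∞) ^ m * ENNReal.ofReal ((1/2)^m) = 1 := by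
  rw [ENNReal.ofReal_pow (by positivity), ← mul_pow]
  have : (2:ℝ≥0∞) * ENNReal.ofReal (1/2) = 1 := by
    rw [show (2:ℝ≥0∞) = ENNReal.ofReal 2 by simp, ← ENNReal.ofReal_mul (by positivity)]
    simp
  rw [this, one_pow]

lemma IsDyadicCube.convex_interior {d : ℕ} {Q : Set (Ed d)} (hQ : IsDyadicCube Q) :
    Convex ℝ (interior Q) := by
  obtain ⟨a, p, rfl⟩ := hQ.exists_eq
  rw [interior_setOf_Ico]
  exact convex_openBox a _

lemma monotone_scaledJump {d : ℕ} (g : Ed d → ℝ) {Q : Set (Ed d)} (hQ : IsDyadicCube Q) (lam : ℝ) :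
    Monotone fun m => scaledJump g Q m lam := by
  refine monotone_nat_of_le_succ fun m => ?_
  unfold scaledJump
  rw [pow_succ, mul_assoc, Finset.mul_sum _ _ (2:ℝ≥0∞)]
  gcongr with i
  have e : (EuclideanSpace.single i ((1/2:ℝ)^m) : Ed d) =
      2 • EuclideanSpace.single i ((1/2)^(m+1)) := by
    ext j
    by_cases hj : j = i
    · simp [hj, pow_succ]
      ring
    · simp [hj]
  rw [e]
  exact_mod_cast volume_jumpSet_nsmul_le hQ.convex_interior {x | lam < g x}
    (EuclideanSpace.single i ((1/2)^(m+1))) 2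

lemma measurable_volume_jumpSet {d : ℕ} {g : Ed d → ℝ} (hg : Measurable g) (Q : Set (Ed d))
    (v : Ed d) : Measurable fun lam : ℝ => volume (jumpSet (interior Q) {x | lam < g x} v) := by
  have hV : MeasurableSet {x | x ∈ interior Q ∧ x + v ∈ interior Q} :=
    isOpen_interior.measurableSet.inter
      ((measurable_id.add_const v) isOpen_interior.measurableSet)
  convert measurable_measure_prodMk_left (ν := (volume : Measure (Ed d)))
    (measurableSet_setOf_jump hV hg v) using 3 with lam
  ext x
  simp [jumpSet, and_assoc]

lemma measurable_scaledJump {d : ℕ} {g : Ed d → ℝ} (hg : Measurable g) (Q : Set (Ed d)) (m : ℕ) :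
    Measurable (scaledJump g Q m) :=
  (Finset.measurable_sum _ fun _ _ => measurable_volume_jumpSet hg Q _).const_mul _

lemma IsDyadicCube.hausdorffMeasure_frontier_le {n : ℕ} {Q : Set (Ed (n+1))}
    (hQ : IsDyadicCube Q) {f g : Ed (n+1) → ℝ} (hg : Measurable g)
    (hfg : f =ᵐ[volume.restrict (interior Q)] g) {lam : ℝ}
    (hdens : volume Q / 2 ^ (n + 1 + 2) ≤ volume (Q ∩ {x | lam < f x})) :
    μH[(n:ℝ)] (frontier Q \ mtClosure {x | lam < f x}) ≤
      boundaryConst n * ⨆ m, scaledJump g Q m lam := by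
  have hae := hQ.interior_ae_eq
  rw [← measure_congr hae, ← measure_congr (hae.inter (ae_eq_refl {x | lam < f x}))] at hdens
  have hfg' : ∀ᵐ x, x ∈ interior Q → f x = g x :=
    (ae_restrict_iff' isOpen_interior.measurableSet).1 hfg
  have hE : (interior Q ∩ {x | lam < f x} : Set _) =ᵐ[volume]
      (interior Q ∩ {x | lam < g x} : Set _) := by
    rw [eventuallyEq_set]
    filter_upwards [hfg'] with x hx
    exact and_congr_right fun h => by simp [hx h]
  rw [measure_congr hE] at hdens
  have hmono : mtClosure (interior Q ∩ {x | lam < g x}) ⊆ mtClosure {x | lam < f x} := by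
    refine mtClosure_mono_ae (hE.symm.le.trans ?_)
    exact Eventually.of_forall fun x hx => hx.2
  refine (measure_mono (sdiff_subset_sdiff_right hmono)).trans ?_
  have hP (m : ℕ) : ∑ i, volume (jumpSet (interior Q) (interior Q ∩ {x | lam < g x})
      (EuclideanSpace.single i ((1/2)^m))) ≤
        ENNReal.ofReal ((1/2)^m) * ⨆ m, scaledJump g Q m lam := by
    calc _ = ENNReal.ofReal ((1/2)^m) * scaledJump g Q m lam := by
          rw [scaledJump, ← mul_assoc, mul_comm (ENNReal.ofReal _), two_pow_mul_ofReal, one_mul]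
          refine Finset.sum_congr rfl fun i _ => ?_
          congr 1
          ext x
          simp +contextual [jumpSet]
      _ ≤ _ := by
          gcongr
          exact le_iSup (fun m => scaledJump g Q m lam) m
  have hEm : MeasurableSet (interior Q ∩ {x | lam < g x}) :=
    isOpen_interior.measurableSet.inter (measurableSet_lt measurable_const hg)
  obtain ⟨a, p, hQa⟩ := hQ.exists_eq
  have hint : interior Q = openBox a ((2:ℝ)^p) := by
    rw [hQa, interior_setOf_Ico]
    rfl
  replace hdens : volume (interior Q) / 2 ^ (n + 1 + 2) ≤
      volume (interior Q ∩ (interior Q ∩ {x | lam < g x})) := by rwa [← inter_assoc, inter_self]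
  rw [hint] at hP hdens hEm ⊢
  refine hausdorffMeasure_boundary_le hEm hP hdens fun x hx => ?_
  have hclosed : IsClosed {x : Ed (n+1) | ∀ k, x k ∈ Icc (a k) (a k + (2:ℝ)^p)} := by
    rw [ofPred_forall]
    exact isClosed_iInter fun k => isClosed_Icc.preimage (EuclideanSpace.proj k).continuous
  have hx1 : ∀ k, x k ∈ Icc (a k) (a k + (2:ℝ)^p) :=
    closure_minimal (by
      rw [hQa]
      exact fun y hy k => Ico_subset_Icc_self (hy k)) hclosed hx.1
  refine ⟨hx1, ?_⟩
  by_contra! hne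
  exact hx.2 (hint ▸ fun k => ⟨(hx1 k).1.lt_of_ne' (hne k).1, (hx1 k).2.lt_of_ne (hne k).2⟩)

lemma measurableSet_setOf_isMaximalCube {d : ℕ} (𝒬 : Finset (Set (Ed d))) (f : Ed d → ℝ)
    (Q : Set (Ed d)) : MeasurableSet {lam : ℝ | IsMaximalCube 𝒬 f lam Q} := by
  have e : {lam : ℝ | IsMaximalCube 𝒬 f lam Q} = {_lam : ℝ | Q ∈ 𝒬} ∩ (Iio (⨍ z in Q, f z) ∩
      ⋂ P ∈ 𝒬, {lam : ℝ | lam < (⨍ z in P, f z) → Q ⊆ P → P = Q}) := by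
    ext lam
    simp only [IsMaximalCube, mem_ofPred_eq, mem_inter_iff, mem_Iio, mem_iInter]
  rw [e]
  refine (MeasurableSet.const _).inter (measurableSet_Iio.inter
    (Finset.measurableSet_biInter _ fun P _ => ?_))
  exact MeasurableSet.imp measurableSet_Iio (MeasurableSet.const _)

lemma measurableSet_setOf_le_volume_inter {d : ℕ} (c : ℝ≥0∞) (f : Ed d → ℝ) (Q : Set (Ed d)) :
    MeasurableSet {lam : ℝ | c ≤ volume (Q ∩ {x | lam < f x})} := by
  have : IsLowerSet {lam : ℝ | c ≤ volume (Q ∩ {x | lam < f x})} := fun a b hba ha =>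
    le_trans (show c ≤ _ from ha)
      (measure_mono (inter_subset_inter_right _ fun x hx => lt_of_le_of_lt hba hx))
  exact this.ordConnected.measurableSet

lemma IsMaximalCube.disjoint {d : ℕ} {𝒬 : Finset (Set (Ed d))} (h𝒬 : ∀ Q ∈ 𝒬, IsDyadicCube Q)
    {f : Ed d → ℝ} {lam : ℝ} {P Q : Set (Ed d)} (hP : IsMaximalCube 𝒬 f lam P)
    (hQ : IsMaximalCube 𝒬 f lam Q) (hPQ : P ≠ Q) : Disjoint P Q := by
  refine Set.disjoint_left.2 fun x hxP hxQ => hPQ ?_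
  rcases (h𝒬 P hP.1).subset_or_subset (h𝒬 Q hQ.1) hxP hxQ with h | h
  · exact (hP.2.2 Q hQ.1 hQ.2.1 h).symm
  · exact hQ.2.2 P hP.1 hP.2.1 h

/-- The points whose segment to `x + v` is contained in the interior of one of the cubes. -/
def segmentDomain {d : ℕ} (𝒬 : Finset (Set (Ed d))) (v : Ed d) : Set (Ed d) :=
  ⋃ Q ∈ 𝒬, {x | x ∈ interior Q ∧ x + v ∈ interior Q}

lemma isOpen_segmentDomain {d : ℕ} (𝒬 : Finset (Set (Ed d))) (v : Ed d) :
    IsOpen (segmentDomain 𝒬 v) :=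
  isOpen_biUnion fun _ _ =>
    isOpen_interior.inter (isOpen_interior.preimage (continuous_id.add continuous_const))

lemma add_single_mem_of_mem_segmentDomain {d : ℕ} {𝒬 : Finset (Set (Ed d))}
    (h𝒬 : ∀ Q ∈ 𝒬, IsDyadicCube Q) {i : Fin d} {h : ℝ} (hh : 0 < h) {x : Ed d}
    (hx : x ∈ segmentDomain 𝒬 (EuclideanSpace.single i h)) {s : ℝ} (hs : s ∈ Icc 0 h) :
    x + EuclideanSpace.single i s ∈ ⋃ Q ∈ 𝒬, interior Q := by
  simp only [segmentDomain, mem_iUnion, mem_ofPred_eq, exists_prop] at hx ⊢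
  obtain ⟨Q, hQ, hx0, hx1⟩ := hx
  refine ⟨Q, hQ, ?_⟩
  convert (h𝒬 Q hQ).convex_interior.add_smul_mem hx0 hx1 (t := s / h)
    ⟨div_nonneg hs.1 hh.le, (div_le_one hh).2 hs.2⟩ using 2
  ext j
  by_cases hj : j = i
  · simp [hj, div_mul_cancel₀ _ hh.ne']
  · simp [hj]

lemma sum_indicator_volume_jumpSet_le {d : ℕ} {𝒬 : Finset (Set (Ed d))}
    (h𝒬 : ∀ Q ∈ 𝒬, IsDyadicCube Q) {f g : Ed d → ℝ} (hg : Measurable g)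
    {Λ : Set (Ed d) → Set ℝ} (hΛ : ∀ Q, ∀ lam ∈ Λ Q, IsMaximalCube 𝒬 f lam Q) (v : Ed d)
    (lam : ℝ) :
    ∑ Q ∈ 𝒬, (Λ Q).indicator
        (fun lam => volume (jumpSet (interior Q) {x | lam < g x} v)) lam ≤
      volume {x | x ∈ segmentDomain 𝒬 v ∧ ¬(lam < g x ↔ lam < g (x + v))} := by
  classical
  simp only [indicator_apply]
  rw [← Finset.sum_filter, ← measure_biUnion_finset]
  · refine measure_mono (iUnion₂_subset fun Q hQ x hx => ⟨?_, hx.2.2⟩)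
    exact mem_biUnion (Finset.mem_filter.1 hQ).1 (show _ ∧ _ from ⟨hx.1, hx.2.1⟩)
  · intro P hP Q hQ hPQ
    have h1 := hΛ P lam (Finset.mem_filter.1 hP).2
    have h2 := hΛ Q lam (Finset.mem_filter.1 hQ).2
    exact (h1.disjoint h𝒬 h2 hPQ).mono (fun x hx => interior_subset hx.1)
      fun x hx => interior_subset hx.1
  · exact fun Q _ => measurableSet_jumpSet isOpen_interior.measurableSet
      (measurableSet_lt measurable_const hg) v

lemma sum_lintegral_scaledJump_le {d : ℕ} {𝒬 : Finset (Set (Ed d))}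
    (h𝒬 : ∀ Q ∈ 𝒬, IsDyadicCube Q) {f g : Ed d → ℝ} (hg : Measurable g)
    (hgint : IntegrableOn g (⋃ Q ∈ 𝒬, interior Q)) {Λ : Set (Ed d) → Set ℝ}
    (hΛm : ∀ Q, MeasurableSet (Λ Q)) (hΛ : ∀ Q, ∀ lam ∈ Λ Q, IsMaximalCube 𝒬 f lam Q) (m : ℕ) :
    ∑ Q ∈ 𝒬, ∫⁻ lam in Λ Q, scaledJump g Q m lam ≤ d * var (⋃ Q ∈ 𝒬, interior Q) g := by
  set h : ℝ := (1/2)^m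
  have hh : 0 < h := by positivity
  have hi (i : Fin d) : ∑ Q ∈ 𝒬, ∫⁻ lam in Λ Q,
      volume (jumpSet (interior Q) {x | lam < g x} (EuclideanSpace.single i h)) ≤
        ENNReal.ofReal h * var (⋃ Q ∈ 𝒬, interior Q) g := by
    set v : Ed d := EuclideanSpace.single i h
    calc _ = ∫⁻ lam, ∑ Q ∈ 𝒬, (Λ Q).indicator
          (fun lam => volume (jumpSet (interior Q) {x | lam < g x} v)) lam := by
          rw [lintegral_finsetSum _ fun Q _ => (measurable_volume_jumpSet hg Q v).indicator (hΛm Q)]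
          exact Finset.sum_congr rfl fun Q _ => (lintegral_indicator (hΛm Q) _).symm
      _ ≤ ∫⁻ lam : ℝ, volume {x | x ∈ segmentDomain 𝒬 v ∧ ¬(lam < g x ↔ lam < g (x + v))} :=
          lintegral_mono fun lam => sum_indicator_volume_jumpSet_le h𝒬 hg hΛ v lam
      _ = ∫⁻ x in segmentDomain 𝒬 v, ‖g (x + v) - g x‖ₑ :=
          lintegral_volume_jump (isOpen_segmentDomain 𝒬 v).measurableSet hg v
      _ ≤ _ := lintegral_translate_sub_le_var (isOpen_segmentDomain 𝒬 v) i hh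
          (fun x hx s hs => add_single_mem_of_mem_segmentDomain h𝒬 hh hx hs) hgint
  calc _ = 2 ^ m * ∑ i, ∑ Q ∈ 𝒬, ∫⁻ lam in Λ Q,
        volume (jumpSet (interior Q) {x | lam < g x} (EuclideanSpace.single i h)) := by
        rw [Finset.sum_comm, Finset.mul_sum]
        refine Finset.sum_congr rfl fun Q _ => ?_
        rw [← lintegral_finsetSum _ fun i _ => measurable_volume_jumpSet hg Q _]
        exact lintegral_const_mul _
          (Finset.measurable_sum _ fun _ _ => measurable_volume_jumpSet hg Q _)
    _ ≤ 2 ^ m * ∑ _i : Fin d, ENNReal.ofReal h * var (⋃ Q ∈ 𝒬, interior Q) g := by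
        gcongr with i
        exact hi i
    _ = _ := by
        rw [Finset.sum_const, Finset.card_univ, Fintype.card_fin, nsmul_eq_mul,
          mul_left_comm, ← mul_assoc (2 ^ m), two_pow_mul_ofReal, one_mul]

/-- The high-density part of the variation of the finite dyadic maximal function is bounded:
`Σ_{Q ∈ 𝒬} ∫_{λ : Q ∈ 𝒬_λ, |Q ∩ {f > λ}| ≥ 2^{-d-2}|Q|} σ(∂Q \ cl*{f > λ}) dλ
  ≤ C_d · var_{⋃ int Q} f`. -/
theorem high_density_cubes_bound (d : ℕ) (hd : 1 ≤ d) :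
    ∃ C : ℝ≥0∞, C ≠ ∞ ∧
      ∀ (𝒬 : Finset (Set (Ed d))), (∀ Q ∈ 𝒬, IsDyadicCube Q) →
        ∀ (Ω : Set (Ed d)), IsOpen Ω → (⋃ Q ∈ 𝒬, interior Q) ⊆ Ω →
          ∀ f : Ed d → ℝ, IntegrableOn f Ω volume →
            ∑ Q ∈ 𝒬, ∫⁻ lam in {lam : ℝ | IsMaximalCube 𝒬 f lam Q ∧
                volume Q / 2 ^ (d + 2) ≤ volume (Q ∩ {x | lam < f x})},
              μH[(d:ℝ) - 1] (frontier Q \ mtClosure {x | lam < f x}) ≤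
            C * var (⋃ Q ∈ 𝒬, interior Q) f := by
  obtain ⟨n, rfl⟩ : ∃ n, d = n + 1 := ⟨d - 1, by omega⟩
  refine ⟨boundaryConst n * (n + 1 : ℕ),
    ENNReal.mul_ne_top (boundaryConst_ne_top n) (ENNReal.natCast_ne_top _), ?_⟩
  intro 𝒬 h𝒬 Ω _ hΩ f hf
  have hdim : ((n + 1 : ℕ) : ℝ) - 1 = n := by push_cast; ring
  rw [hdim]
  set U := ⋃ Q ∈ 𝒬, interior Q
  have hfU : IntegrableOn f U := hf.mono_set hΩ
  set g := hfU.1.mk f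
  have hg : Measurable g := hfU.1.stronglyMeasurable_mk.measurable
  have hfg : f =ᵐ[volume.restrict U] g := hfU.1.ae_eq_mk
  set Λ : Set (Ed (n+1)) → Set ℝ := fun Q => {lam : ℝ | IsMaximalCube 𝒬 f lam Q ∧
    volume Q / 2 ^ (n + 1 + 2) ≤ volume (Q ∩ {x | lam < f x})}
  have hΛm (Q) : MeasurableSet (Λ Q) :=
    (measurableSet_setOf_isMaximalCube 𝒬 f Q).inter (measurableSet_setOf_le_volume_inter _ f Q)
  have hsJ (Q) := fun m => measurable_scaledJump hg Q m
  calc _ ≤ ∑ Q ∈ 𝒬, ∫⁻ lam in Λ Q, boundaryConst n * ⨆ m, scaledJump g Q m lam := by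
        refine Finset.sum_le_sum fun Q hQ => setLIntegral_mono' (hΛm Q) fun lam hlam => ?_
        exact (h𝒬 Q hQ).hausdorffMeasure_frontier_le hg
          (ae_restrict_of_ae_restrict_of_subset (subset_biUnion_of_mem hQ) hfg) hlam.2
    _ = boundaryConst n * ∑ Q ∈ 𝒬, ⨆ m, ∫⁻ lam in Λ Q, scaledJump g Q m lam := by
        rw [Finset.mul_sum]
        refine Finset.sum_congr rfl fun Q hQ => ?_
        rw [lintegral_const_mul _ (Measurable.iSup (hsJ Q)), lintegral_iSup (hsJ Q)
          fun m k hmk lam => monotone_scaledJump g (h𝒬 Q hQ) lam hmk]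
    _ = boundaryConst n * ⨆ m, ∑ Q ∈ 𝒬, ∫⁻ lam in Λ Q, scaledJump g Q m lam := by
        simp only [← Finset.sum_coe_sort 𝒬]
        congr 1
        exact ENNReal.finsetSum_iSup_of_monotone
          (f := fun (Q : 𝒬) m => ∫⁻ lam in Λ Q, scaledJump g Q m lam) fun Q m k hmk =>
            lintegral_mono fun lam => monotone_scaledJump g (h𝒬 Q Q.2) lam hmk
    _ ≤ boundaryConst n * ((n + 1 : ℕ) * var U g) := by
        gcongr
        exact iSup_le fun m => sum_lintegral_scaledJump_le h𝒬 hg (hfU.congr hfg) hΛm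
          (fun Q lam hlam => hlam.1) m
    _ = _ := by rw [var_congr hfg, mul_assoc]

end
end

section
/- Let d ≥ 1, let Q₀ ⊆ ℝ^d be a dyadic cube, let λ₀ ∈ ℝ, and let f ∈ L¹(Q₀) satisfy |{f > λ₀} ∩ Q₀| ≤ 2^{-d-2}|Q₀|. For each dyadic cube P with P ⊊ Q₀ define m_P = min{ max{ inf{λ ∈ ℝ : |{f > λ} ∩ P| < |P|/2}, max{ f_{P'} : P' a dyadic cube with P ⊊ P' ⊆ Q₀ } }, f_P }. Then |Q₀| · (f_{Q₀} − λ₀) ≤ 2^{d+2} · Σ_{P dyadic, P ⊊ Q₀} ∫_{λ ∈ (m_P, f_P)} |P ∩ {f > λ}| dλ (each integral being over the open interval (m_P, f_P), which is empty if m_P ≥ f_P). -/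
open MeasureTheory Metric Set Filter
open scoped ENNReal Topology

noncomputable section

/-- The level
`m_P = min{ max{ inf{λ : |{f > λ} ∩ P| < |P|/2}, max{f_{P'} : P ⊊ P' ⊆ Q₀ dyadic} }, f_P }`. -/
def mLevel {d : ℕ} (Q₀ : Set (Ed d)) (f : Ed d → ℝ) (P : Set (Ed d)) : ℝ :=
  min
    (max (sInf {lam : ℝ | volume ({x | lam < f x} ∩ P) < volume P / 2})
      (sSup {y : ℝ | ∃ P' : Set (Ed d), IsDyadicCube P' ∧ P ⊂ P' ∧ P' ⊆ Q₀ ∧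
        y = ⨍ z in P', f z}))
    (⨍ z in P, f z)

/-- The half-open dyadic cube of side length `2 ^ n` containing `x`. -/
def dyadicCubeAt {d : ℕ} (n : ℤ) (x : Ed d) : Set (Ed d) :=
  {y | ∀ i, ⌊y i / (2 : ℝ) ^ n⌋ = ⌊x i / (2 : ℝ) ^ n⌋}

lemma mem_dyadicCubeAt_self {d : ℕ} (n : ℤ) (x : Ed d) : x ∈ dyadicCubeAt n x := fun _ => rfl

lemma mem_Ico_zpow_iff_floor (n m : ℤ) (t : ℝ) :
    t ∈ Set.Ico ((2 : ℝ) ^ n * m) ((2 : ℝ) ^ n * (m + 1)) ↔ ⌊t / (2 : ℝ) ^ n⌋ = m := by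
  have h : (0 : ℝ) < 2 ^ n := by positivity
  rw [Int.floor_eq_iff, le_div_iff₀ h, div_lt_iff₀ h, Set.mem_Ico, mul_comm _ (m : ℝ),
    mul_comm _ ((m : ℝ) + 1)]

lemma dyadicCubeAt_eq {d : ℕ} (n : ℤ) (x : Ed d) :
    dyadicCubeAt n x = {y : Ed d | ∀ i, y i ∈ Set.Ico ((2 : ℝ) ^ n * ⌊x i / (2 : ℝ) ^ n⌋)
      ((2 : ℝ) ^ n * (⌊x i / (2 : ℝ) ^ n⌋ + 1))} := by
  ext y
  simp only [dyadicCubeAt, mem_Ico_zpow_iff_floor, mem_ofPred_eq]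

lemma isDyadicCube_dyadicCubeAt {d : ℕ} (n : ℤ) (x : Ed d) : IsDyadicCube (dyadicCubeAt n x) :=
  ⟨n, fun i => ⌊x i / (2 : ℝ) ^ n⌋, dyadicCubeAt_eq n x⟩

lemma IsDyadicCube.exists_eq_dyadicCubeAt {d : ℕ} {P : Set (Ed d)} (hP : IsDyadicCube P)
    {x : Ed d} (hx : x ∈ P) : ∃ n, P = dyadicCubeAt n x := by
  obtain ⟨n, m, rfl⟩ := hP
  refine ⟨n, ?_⟩
  simp only [mem_ofPred_eq, mem_Ico_zpow_iff_floor] at hx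
  ext y
  simp only [mem_ofPred_eq, mem_Ico_zpow_iff_floor, dyadicCubeAt, hx]

lemma IsDyadicCube.nonempty {d : ℕ} {P : Set (Ed d)} (hP : IsDyadicCube P) : P.Nonempty := by
  obtain ⟨n, m, rfl⟩ := hP
  refine ⟨WithLp.toLp 2 fun i => (2 : ℝ) ^ n * m i, fun i => ?_⟩
  rw [mem_Ico_zpow_iff_floor]
  have h : (2 : ℝ) ^ n ≠ 0 := by positivity
  simp [mul_div_cancel_left₀ _ h]

lemma dyadicCubeAt_mono {d : ℕ} (x : Ed d) : Monotone fun n => dyadicCubeAt n x := by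
  have key : ∀ (n : ℤ) (j : ℕ) (s t : ℝ), ⌊s / (2 : ℝ) ^ n⌋ = ⌊t / (2 : ℝ) ^ n⌋ →
      ⌊s / (2 : ℝ) ^ (n + j)⌋ ≤ ⌊t / (2 : ℝ) ^ (n + j)⌋ := by
    intro n j s t h
    have hk : ∀ (k : ℤ) (u : ℝ), k ≤ ⌊u / (2 : ℝ) ^ (n + j)⌋ ↔ k * 2 ^ j ≤ ⌊u / (2 : ℝ) ^ n⌋ := by
      intro k u
      rw [Int.le_floor, Int.le_floor, zpow_add₀ two_ne_zero, ← div_div, zpow_natCast,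
        le_div_iff₀ (by positivity)]
      push_cast
      rfl
    rw [hk, ← h, ← hk]
  intro n n' hn y hy i
  obtain ⟨j, rfl⟩ := Int.le.dest hn
  exact le_antisymm (key n j _ _ (hy i)) (key n j _ _ (hy i).symm)

lemma IsDyadicCube.subset_or_subset_s8 {d : ℕ} {P R : Set (Ed d)} (hP : IsDyadicCube P)
    (hR : IsDyadicCube R) (h : (P ∩ R).Nonempty) : P ⊆ R ∨ R ⊆ P := by
  obtain ⟨x, hxP, hxR⟩ := h
  obtain ⟨n, rfl⟩ := hP.exists_eq_dyadicCubeAt hxP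
  obtain ⟨k, rfl⟩ := hR.exists_eq_dyadicCubeAt hxR
  exact (le_total n k).imp (fun h => dyadicCubeAt_mono x h) (fun h => dyadicCubeAt_mono x h)

lemma countable_isDyadicCube (d : ℕ) : {P : Set (Ed d) | IsDyadicCube P}.Countable := by
  refine (countable_range fun q : ℤ × (Fin d → ℤ) => {x : Ed d | ∀ i,
    x i ∈ Set.Ico ((2 : ℝ) ^ q.1 * q.2 i) ((2 : ℝ) ^ q.1 * (q.2 i + 1))}).mono ?_
  rintro P ⟨n, m, rfl⟩
  exact ⟨(n, m), rfl⟩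

lemma IsDyadicCube.measurableSet {d : ℕ} {P : Set (Ed d)} (hP : IsDyadicCube P) :
    MeasurableSet P := by
  obtain ⟨n, m, rfl⟩ := hP
  rw [ofPred_forall]
  exact MeasurableSet.iInter fun i =>
    measurableSet_Ico.preimage (by fun_prop : Measurable fun x : Ed d => x i)

lemma volume_dyadicCubeAt {d : ℕ} (n : ℤ) (x : Ed d) :
    volume (dyadicCubeAt n x) = ENNReal.ofReal ((2 : ℝ) ^ n) ^ d := by
  have h := (EuclideanSpace.volume_preserving_symm_measurableEquiv_toLp (Fin d)).measure_preimage_equiv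
    (Set.pi univ fun i => Set.Ico ((2 : ℝ) ^ n * ⌊x i / (2 : ℝ) ^ n⌋)
      ((2 : ℝ) ^ n * (⌊x i / (2 : ℝ) ^ n⌋ + 1)))
  rw [Real.volume_pi_Ico] at h
  rw [dyadicCubeAt_eq]
  convert h using 1
  · congr 1
    ext y
    simp
  · simp [mul_add]

lemma IsDyadicCube.volume_ne_zero {d : ℕ} {P : Set (Ed d)} (hP : IsDyadicCube P) :
    volume P ≠ 0 := by
  obtain ⟨x, hx⟩ := hP.nonempty
  obtain ⟨n, rfl⟩ := hP.exists_eq_dyadicCubeAt hx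
  rw [volume_dyadicCubeAt]
  exact pow_ne_zero _ (by simpa using (by positivity : (0 : ℝ) < 2 ^ n))

lemma IsDyadicCube.volume_ne_top {d : ℕ} {P : Set (Ed d)} (hP : IsDyadicCube P) :
    volume P ≠ ∞ := by
  obtain ⟨x, hx⟩ := hP.nonempty
  obtain ⟨n, rfl⟩ := hP.exists_eq_dyadicCubeAt hx
  rw [volume_dyadicCubeAt]
  finiteness

lemma IsDyadicCube.exists_parent {d : ℕ} (hd : 1 ≤ d) {P Q : Set (Ed d)} (hP : IsDyadicCube P)
    (hQ : IsDyadicCube Q) (h : P ⊂ Q) :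
    ∃ R, IsDyadicCube R ∧ P ⊂ R ∧ R ⊆ Q ∧ volume R = 2 ^ d * volume P := by
  have hP0 := hP.volume_ne_zero
  have hPt := hP.volume_ne_top
  obtain ⟨x, hx⟩ := hP.nonempty
  obtain ⟨n, rfl⟩ := hP.exists_eq_dyadicCubeAt hx
  obtain ⟨k, rfl⟩ := hQ.exists_eq_dyadicCubeAt (h.1 hx)
  have hnk : n < k := lt_of_not_ge fun hkn => h.2 (dyadicCubeAt_mono x hkn)
  have hvol : volume (dyadicCubeAt (n + 1) x) = 2 ^ d * volume (dyadicCubeAt n x) := by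
    rw [volume_dyadicCubeAt, volume_dyadicCubeAt, zpow_add₀ two_ne_zero, zpow_one, mul_comm,
      ENNReal.ofReal_mul zero_le_two, mul_pow]
    simp
  refine ⟨dyadicCubeAt (n + 1) x, isDyadicCube_dyadicCubeAt _ _, ⟨dyadicCubeAt_mono x (by lia),
    fun hsub => ?_⟩, dyadicCubeAt_mono x (by lia), hvol⟩
  have hle := measure_mono (μ := volume) hsub
  rw [hvol] at hle
  have h2 : (2 : ℝ≥0∞) * volume (dyadicCubeAt n x) ≤ 2 ^ d * volume (dyadicCubeAt n x) := by
    gcongr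
    exact le_self_pow₀ one_le_two (by lia)
  have h3 := h2.trans hle
  rw [two_mul] at h3
  exact absurd h3 (not_le.2 (ENNReal.lt_add_right hPt hP0))

lemma IsDyadicCube.exists_small {d : ℕ} {Q V : Set (Ed d)} (hQ : IsDyadicCube Q)
    (hV : IsOpen V) {x : Ed d} (hxQ : x ∈ Q) (hxV : x ∈ V) :
    ∃ P, IsDyadicCube P ∧ P ⊆ Q ∧ x ∈ P ∧ P ⊆ V := by
  obtain ⟨k, rfl⟩ := hQ.exists_eq_dyadicCubeAt hxQ
  have hV' : IsOpen ((WithLp.toLp 2 : (Fin d → ℝ) → Ed d) ⁻¹' V) :=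
    hV.preimage (PiLp.continuous_toLp 2 _)
  obtain ⟨ε, hε, hball⟩ := Metric.isOpen_iff.1 hV' (WithLp.ofLp x) (by simpa using hxV)
  obtain ⟨j, hj⟩ := exists_pow_lt_of_lt_one hε (by norm_num : (1 / 2 : ℝ) < 1)
  have hn : (2 : ℝ) ^ min k (-(j : ℤ)) < ε := by
    refine lt_of_le_of_lt (zpow_le_zpow_right₀ one_le_two (min_le_right _ _)) ?_
    simpa [zpow_neg] using hj
  refine ⟨dyadicCubeAt (min k (-(j : ℤ))) x, isDyadicCube_dyadicCubeAt _ _,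
    dyadicCubeAt_mono x (min_le_left _ _), mem_dyadicCubeAt_self _ _, fun y hy => ?_⟩
  have hyball : WithLp.ofLp y ∈ ball (WithLp.ofLp x) ε := by
    rw [mem_ball, dist_pi_lt_iff hε]
    intro i
    have h0 : (0 : ℝ) < 2 ^ min k (-(j : ℤ)) := by positivity
    have h1 := Int.abs_sub_lt_one_of_floor_eq_floor (hy i)
    rw [← sub_div, abs_div, abs_of_pos h0, div_lt_one h0] at h1
    exact h1.trans hn
  simpa using hball hyball

lemma IsDyadicCube.finite_between {d : ℕ} {P : Set (Ed d)} (hP : IsDyadicCube P)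
    (Q : Set (Ed d)) (hQ : IsDyadicCube Q) :
    {R | (IsDyadicCube R ∧ R ⊆ Q) ∧ P ⊆ R}.Finite := by
  obtain ⟨x, hx⟩ := hP.nonempty
  by_cases hxQ : x ∈ Q
  · obtain ⟨n, rfl⟩ := hP.exists_eq_dyadicCubeAt hx
    obtain ⟨k, rfl⟩ := hQ.exists_eq_dyadicCubeAt hxQ
    refine ((Set.finite_Icc (min n k) (max n k)).image fun j => dyadicCubeAt j x).subset ?_
    rintro R ⟨⟨hR, hRQ⟩, hPR⟩
    obtain ⟨j, rfl⟩ := hR.exists_eq_dyadicCubeAt (hPR hx)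
    rcases le_total j n with hjn | hnj
    · exact ⟨n, by simp, hPR.antisymm (dyadicCubeAt_mono x hjn)⟩
    rcases le_total j k with hjk | hkj
    · exact ⟨j, by simp [hnj, hjk], rfl⟩
    · exact ⟨k, by simp, (dyadicCubeAt_mono x hkj).antisymm hRQ⟩
  · convert Set.finite_empty
    ext R
    simp only [mem_ofPred_eq, mem_empty_iff_false, iff_false]
    exact fun h => hxQ (h.1.2 (h.2 hx))

/-- The dyadic cubes contained in `Q`. -/
def dyadicSubcubes {d : ℕ} (Q : Set (Ed d)) : Set (Set (Ed d)) := {P | IsDyadicCube P ∧ P ⊆ Q}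

instance {d : ℕ} (Q : Set (Ed d)) : Countable (dyadicSubcubes Q) :=
  ((countable_isDyadicCube d).mono fun _ h => h.1).to_subtype

lemma exists_maximal_dyadicSubcube {d : ℕ} {Q : Set (Ed d)} (hQ : IsDyadicCube Q)
    (p : Set (Ed d) → Prop) {P : Set (Ed d)} (hP : P ∈ dyadicSubcubes Q) (hp : p P) :
    ∃ R, P ⊆ R ∧ Maximal (fun R => R ∈ dyadicSubcubes Q ∧ p R) R := by
  have hfin : {R | (R ∈ dyadicSubcubes Q ∧ p R) ∧ P ⊆ R}.Finite :=
    (hP.1.finite_between Q hQ).subset fun R h => ⟨h.1.1, h.2⟩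
  obtain ⟨R, hPR, hR⟩ := hfin.exists_le_maximal (a := P) ⟨⟨hP, hp⟩, Subset.rfl⟩
  exact ⟨R, hPR, hR.prop.1, fun S hS hRS => hR.2 ⟨hS, hPR.trans hRS⟩ hRS⟩

lemma pairwise_disjoint_maximal {d : ℕ} {Q : Set (Ed d)} (p : Set (Ed d) → Prop) :
    Pairwise (Function.onFun Disjoint fun P :
      {P // Maximal (fun R => R ∈ dyadicSubcubes Q ∧ p R) P} => P.1) := by
  rintro ⟨P, hP⟩ ⟨R, hR⟩ hne
  by_contra h
  rcases hP.prop.1.1.subset_or_subset_s8 hR.prop.1.1 (not_disjoint_iff_nonempty_inter.1 h) with h | h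
  · exact hne (Subtype.ext (hP.eq_of_subset hR.prop h))
  · exact hne (Subtype.ext (hR.eq_of_subset hP.prop h).symm)

instance {d : ℕ} (Q : Set (Ed d)) (p : Set (Ed d) → Prop) :
    Countable {P // Maximal (fun R => R ∈ dyadicSubcubes Q ∧ p R) P} :=
  ((countable_isDyadicCube d).mono (s₁ := {P | Maximal (fun R => R ∈ dyadicSubcubes Q ∧ p R) P})
    fun _ h => by
      rw [mem_ofPred_eq] at h
      exact h.prop.1.1).to_subtype

lemma tsum_volume_inter_maximal {d : ℕ} (Q : Set (Ed d)) (p : Set (Ed d) → Prop)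
    (A : Set (Ed d)) :
    ∑' P : {P // Maximal (fun R => R ∈ dyadicSubcubes Q ∧ p R) P}, volume (A ∩ P.1) =
      volume (A ∩ ⋃ P : {P // Maximal (fun R => R ∈ dyadicSubcubes Q ∧ p R) P}, P.1) := by
  have hm : ∀ P : {P // Maximal (fun R => R ∈ dyadicSubcubes Q ∧ p R) P}, MeasurableSet P.1 :=
    fun P => P.2.prop.1.1.measurableSet
  rw [inter_comm, ← Measure.restrict_apply (MeasurableSet.iUnion hm),
    measure_iUnion (pairwise_disjoint_maximal p) hm]
  refine tsum_congr fun P => ?_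
  rw [Measure.restrict_apply (hm P), inter_comm]

lemma measure_not_mem_dense_cube {d : ℕ} {Q : Set (Ed d)} (hQ : IsDyadicCube Q)
    (A : Set (Ed d)) {C : ℝ≥0∞} (hC : 2 ≤ C) :
    volume {x ∈ A ∩ Q | ∀ P ∈ dyadicSubcubes Q, x ∈ P → ¬ volume P ≤ C * volume (A ∩ P)} = 0 := by
  set N := {x ∈ A ∩ Q | ∀ P ∈ dyadicSubcubes Q, x ∈ P → ¬ volume P ≤ C * volume (A ∩ P)}
  by_contra h0
  have htop : volume N ≠ ∞ :=
    measure_ne_top_of_subset (fun x hx => hx.1.2) hQ.volume_ne_top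
  have hlt : volume N < 2 * volume N := by
    rw [two_mul]; exact ENNReal.lt_add_right htop h0
  obtain ⟨V, hNV, hV, hVlt⟩ := N.exists_isOpen_lt_of_lt _ hlt
  let p : Set (Ed d) → Prop := fun P => P ⊆ V ∧ (P ∩ N).Nonempty
  have hcov : N ⊆ ⋃ P : {P // Maximal (fun R => R ∈ dyadicSubcubes Q ∧ p R) P}, P.1 := by
    intro x hx
    obtain ⟨P, hP, hPQ, hxP, hPV⟩ := hQ.exists_small hV hx.1.2 (hNV hx)
    obtain ⟨R, hPR, hR⟩ := exists_maximal_dyadicSubcube hQ p ⟨hP, hPQ⟩ ⟨hPV, x, hxP, hx⟩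
    exact mem_iUnion.2 ⟨⟨R, hR⟩, hPR hxP⟩
  have h1 : 2 * volume N ≤ volume V := by
    calc 2 * volume N
        = ∑' P : {P // Maximal (fun R => R ∈ dyadicSubcubes Q ∧ p R) P},
            2 * volume (N ∩ P.1) := by
          rw [ENNReal.tsum_mul_left, tsum_volume_inter_maximal, inter_eq_self_of_subset_left hcov]
      _ ≤ ∑' P : {P // Maximal (fun R => R ∈ dyadicSubcubes Q ∧ p R) P}, volume (V ∩ P.1) := by
          refine ENNReal.tsum_le_tsum fun P => ?_
          obtain ⟨hPV, x, hxP, hxN⟩ := P.2.prop.2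
          rw [inter_eq_self_of_subset_right hPV]
          refine le_trans ?_ (le_of_not_ge (hxN.2 P.1 P.2.prop.1 hxP))
          gcongr
          exact fun y hy => hy.1.1
      _ ≤ volume V := by
          rw [tsum_volume_inter_maximal]
          exact measure_mono inter_subset_left
  exact absurd h1 (not_le.2 hVlt)

lemma bddBelow_volume_superlevel_lt {d : ℕ} (f : Ed d → ℝ) {P : Set (Ed d)}
    (hP : IsDyadicCube P) :
    BddBelow {lam : ℝ | volume ({x | lam < f x} ∩ P) < volume P / 2} := by
  have hmono : Monotone fun n : ℕ => {x | -(n : ℝ) < f x} ∩ P := by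
    intro n k hnk x hx
    have : (n : ℝ) ≤ k := by exact_mod_cast hnk
    exact ⟨lt_of_le_of_lt (neg_le_neg this) hx.1, hx.2⟩
  have hU : ⋃ n : ℕ, {x | -(n : ℝ) < f x} ∩ P = P := by
    ext x
    simp only [mem_iUnion, mem_inter_iff, mem_ofPred_eq, exists_and_right, and_iff_right_iff_imp]
    intro _
    obtain ⟨n, hn⟩ := exists_nat_gt (-f x)
    exact ⟨n, by linarith⟩
  have ht := tendsto_measure_iUnion_atTop (μ := volume) hmono
  rw [hU] at ht
  have hlt : volume P / 2 < volume P :=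
    ENNReal.half_lt_self hP.volume_ne_zero hP.volume_ne_top
  obtain ⟨n, hn⟩ := (ht.eventually (lt_mem_nhds hlt)).exists
  refine ⟨-(n : ℝ), fun lam hlam => le_of_not_gt fun hlt' => ?_⟩
  refine absurd hn (not_lt.2 (le_trans (measure_mono ?_) (le_of_lt hlam)))
  exact fun x hx => ⟨hlt'.trans hx.1, hx.2⟩

lemma mLevel_le {d : ℕ} {Q P : Set (Ed d)} (hQ : IsDyadicCube Q) (hP : IsDyadicCube P)
    (hPQ : P ⊂ Q) (f : Ed d → ℝ) {lam : ℝ} (hmed : volume ({x | lam < f x} ∩ P) < volume P / 2)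
    (havg : ∀ R ∈ dyadicSubcubes Q, P ⊂ R → ⨍ z in R, f z ≤ lam) : mLevel Q f P ≤ lam := by
  refine (min_le_left _ _).trans (max_le ?_ ?_)
  · exact csInf_le (bddBelow_volume_superlevel_lt f hP) hmed
  · refine csSup_le ⟨_, Q, hQ, hPQ, Subset.rfl, rfl⟩ ?_
    rintro _ ⟨R, hR, hPR, hRQ, rfl⟩
    exact havg R ⟨hR, hRQ⟩ hPR

/-- The superlevel set `{f > lam}` fills at least the proportion `2 ^ (-d - 1)` of `P`. -/
def IsDenseAt {d : ℕ} (f : Ed d → ℝ) (lam : ℝ) (P : Set (Ed d)) : Prop :=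
  volume P ≤ 2 ^ (d + 1) * volume ({x | lam < f x} ∩ P)

lemma IsDenseAt.anti {d : ℕ} {f : Ed d → ℝ} {lam lam' : ℝ} {P : Set (Ed d)}
    (h : IsDenseAt f lam P) (hle : lam' ≤ lam) : IsDenseAt f lam' P := by
  refine le_trans h ?_
  gcongr

/-- `P` is a maximal dyadic subcube of `Q` among those where `{f > lam}` is dense. -/
abbrev IsMaxDenseAt {d : ℕ} (Q : Set (Ed d)) (f : Ed d → ℝ) (lam : ℝ) (P : Set (Ed d)) : Prop :=
  Maximal (fun R => R ∈ dyadicSubcubes Q ∧ IsDenseAt f lam R) P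

/-- The levels `lam ≥ a` for which `P` is a maximal dense cube contained in a dyadic subcube
of `Q` where the average of `f` exceeds `lam`. -/
def goodLevels {d : ℕ} (Q : Set (Ed d)) (f : Ed d → ℝ) (a : ℝ) (P : Set (Ed d)) : Set ℝ :=
  {lam | a ≤ lam ∧ IsMaxDenseAt Q f lam P ∧ ∃ R ∈ dyadicSubcubes Q, P ⊆ R ∧ lam < ⨍ z in R, f z}

lemma measurableSet_goodLevels {d : ℕ} (Q : Set (Ed d)) (f : Ed d → ℝ) (a : ℝ)
    (P : Set (Ed d)) : MeasurableSet (goodLevels Q f a P) := by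
  refine OrdConnected.measurableSet ⟨?_⟩
  rintro s ⟨has, hs, -⟩ t ⟨-, ht, R, hR, hPR, htR⟩ u ⟨hsu, hut⟩
  refine ⟨has.trans hsu, ⟨⟨hs.prop.1, ht.prop.2.anti hut⟩, fun S hS hPS => ?_⟩, R, hR, hPR,
    hut.trans_lt htR⟩
  exact hs.2 ⟨hS.1, hS.2.anti hsu⟩ hPS

lemma volume_superlevel_lt_half {d : ℕ} (hd : 1 ≤ d) {Q P R : Set (Ed d)} (hQ : IsDyadicCube Q)
    {f : Ed d → ℝ} {lam : ℝ} (hP : IsMaxDenseAt Q f lam P) (hR : IsDyadicCube R) (hPR : P ⊆ R)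
    (hRQ : R ⊂ Q) : volume ({x | lam < f x} ∩ R) < volume R / 2 := by
  obtain ⟨S, hS, hRS, hSQ, hvol⟩ := hR.exists_parent hd hQ hRQ
  have hnd : ¬ IsDenseAt f lam S := fun hdense =>
    hRS.2 ((hP.2 ⟨⟨hS, hSQ⟩, hdense⟩ (hPR.trans hRS.1)).trans hPR)
  rw [IsDenseAt, not_le, hvol, pow_succ, mul_assoc,
    ENNReal.mul_lt_mul_iff_right (by simp) (by finiteness)] at hnd
  rw [ENNReal.lt_div_iff_mul_lt (by simp) (by simp), mul_comm]
  refine lt_of_le_of_lt ?_ hnd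
  gcongr

lemma exists_cube_mLevel_le {d : ℕ} (hd : 1 ≤ d) {Q P : Set (Ed d)} (hQ : IsDyadicCube Q)
    {f : Ed d → ℝ} {lam : ℝ} (hP : lam ∈ goodLevels Q f (⨍ z in Q, f z) P) :
    ∃ R, (IsDyadicCube R ∧ R ⊂ Q) ∧ P ⊆ R ∧ lam ∈ Ico (mLevel Q f R) (⨍ z in R, f z) := by
  obtain ⟨hle, hmax, R, hR, hPR, hlt⟩ := hP
  obtain ⟨S, hRS, hS⟩ := exists_maximal_dyadicSubcube hQ (fun S => lam < ⨍ z in S, f z) hR hlt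
  have hSQ : S ⊂ Q := hS.prop.1.2.ssubset_of_ne fun h => not_lt.2 hle (h ▸ hS.prop.2)
  refine ⟨S, ⟨hS.prop.1.1, hSQ⟩, hPR.trans hRS, ?_, hS.prop.2⟩
  refine mLevel_le hQ hS.prop.1.1 hSQ f
    (volume_superlevel_lt_half hd hQ hmax hS.prop.1.1 (hPR.trans hRS) hSQ) fun T hT hST => ?_
  exact le_of_not_gt fun h => hST.2 (hS.2 ⟨hT, h⟩ hST.1)

lemma volume_iUnion_maxDense_le {d : ℕ} (Q : Set (Ed d)) (f : Ed d → ℝ) (lam : ℝ) :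
    volume (⋃ P : {P // IsMaxDenseAt Q f lam P}, P.1) ≤
      2 ^ (d + 1) * volume ({x | lam < f x} ∩ Q) := by
  calc volume (⋃ P : {P // IsMaxDenseAt Q f lam P}, P.1)
      ≤ ∑' P : {P // IsMaxDenseAt Q f lam P}, volume P.1 := measure_iUnion_le _
    _ ≤ ∑' P : {P // IsMaxDenseAt Q f lam P}, 2 ^ (d + 1) * volume ({x | lam < f x} ∩ P.1) :=
        ENNReal.tsum_le_tsum fun P => P.2.prop.2
    _ = 2 ^ (d + 1) * volume ({x | lam < f x} ∩ ⋃ P : {P // IsMaxDenseAt Q f lam P}, P.1) := by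
        rw [ENNReal.tsum_mul_left, tsum_volume_inter_maximal]
    _ ≤ 2 ^ (d + 1) * volume ({x | lam < f x} ∩ Q) := by
        gcongr
        exact iUnion_subset fun P => P.2.prop.1.2

lemma measurable_volume_inter_superlevel {d : ℕ} (f : Ed d → ℝ) (P : Set (Ed d)) :
    Measurable fun lam : ℝ => volume (P ∩ {x | lam < f x}) :=
  Antitone.measurable fun _ _ hst =>
    measure_mono (inter_subset_inter_right _ fun _ hx => lt_of_le_of_lt hst hx)

lemma tsum_volume_mul_goodLevels_le {d : ℕ} (hd : 1 ≤ d) {Q : Set (Ed d)} (hQ : IsDyadicCube Q)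
    (f : Ed d → ℝ) :
    ∑' P : dyadicSubcubes Q, volume P.1 * volume (goodLevels Q f (⨍ z in Q, f z) P.1) ≤
      2 ^ (d + 1) * ∑' P : {P : Set (Ed d) // IsDyadicCube P ∧ P ⊂ Q},
          ∫⁻ lam in Set.Ioo (mLevel Q f P.1) (⨍ z in P.1, f z),
            volume (P.1 ∩ {x | lam < f x}) := by
  set a := ⨍ z in Q, f z
  have hcount : Countable {P : Set (Ed d) // IsDyadicCube P ∧ P ⊂ Q} :=
    ((countable_isDyadicCube d).mono (s₁ := {P | IsDyadicCube P ∧ P ⊂ Q})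
      fun _ h => h.1).to_subtype
  have hlevel : ∀ lam : ℝ,
      ∑' P : dyadicSubcubes Q, (goodLevels Q f a P.1).indicator
        (fun lam => volume (P.1 ∩ {x | lam < f x})) lam ≤
      ∑' R : {P : Set (Ed d) // IsDyadicCube P ∧ P ⊂ Q},
        (Ico (mLevel Q f R.1) (⨍ z in R.1, f z)).indicator
          (fun lam => volume (R.1 ∩ {x | lam < f x})) lam := by
    intro lam
    have hm : ∀ P : dyadicSubcubes Q,
        MeasurableSet {x ∈ P.1 | lam ∈ goodLevels Q f a P.1} := by
      intro P
      exact P.2.1.measurableSet.inter (MeasurableSet.const _)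
    have hdisj : Pairwise (Function.onFun Disjoint fun P : dyadicSubcubes Q =>
        {x ∈ P.1 | lam ∈ goodLevels Q f a P.1}) := by
      intro P R hne
      refine Set.disjoint_left.2 ?_
      rintro x ⟨hxP, -, hP, -⟩ ⟨hxR, -, hR, -⟩
      exact Set.disjoint_left.1 (pairwise_disjoint_maximal (IsDenseAt f lam)
        (i := ⟨P.1, hP⟩) (j := ⟨R.1, hR⟩) fun h => hne (Subtype.ext (Subtype.mk.inj h)))
        hxP hxR
    have hleft : ∀ P : dyadicSubcubes Q, (goodLevels Q f a P.1).indicator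
        (fun lam => volume (P.1 ∩ {x | lam < f x})) lam =
        volume.restrict {x | lam < f x} {x ∈ P.1 | lam ∈ goodLevels Q f a P.1} := by
      intro P
      rw [Measure.restrict_apply (hm P)]
      by_cases h : lam ∈ goodLevels Q f a P.1 <;> simp [h]
    have hright : ∀ R : {P : Set (Ed d) // IsDyadicCube P ∧ P ⊂ Q},
        (Ico (mLevel Q f R.1) (⨍ z in R.1, f z)).indicator
          (fun lam => volume (R.1 ∩ {x | lam < f x})) lam =
        volume.restrict {x | lam < f x}
          {x ∈ R.1 | lam ∈ Ico (mLevel Q f R.1) (⨍ z in R.1, f z)} := by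
      intro R
      have hRm : MeasurableSet
          {x ∈ R.1 | lam ∈ Ico (mLevel Q f R.1) (⨍ z in R.1, f z)} :=
        R.2.1.measurableSet.inter (MeasurableSet.const _)
      rw [Measure.restrict_apply hRm]
      by_cases h : lam ∈ Ico (mLevel Q f R.1) (⨍ z in R.1, f z)
      · rw [indicator_of_mem h]
        simp only [h, and_true]
        rfl
      · rw [indicator_of_notMem h]
        simp only [h, and_false]
        simp
    simp_rw [hleft, hright]
    rw [← measure_iUnion hdisj hm]
    refine (measure_mono ?_).trans (measure_iUnion_le _)
    refine iUnion_subset fun P x hx => ?_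
    obtain ⟨R, hR, hPR, hlam⟩ := exists_cube_mLevel_le hd hQ hx.2
    exact mem_iUnion.2 ⟨⟨R, hR⟩, hPR hx.1, hlam⟩
  calc ∑' P : dyadicSubcubes Q, volume P.1 * volume (goodLevels Q f a P.1)
      ≤ ∑' P : dyadicSubcubes Q, 2 ^ (d + 1) * ∫⁻ lam, (goodLevels Q f a P.1).indicator
          (fun lam => volume (P.1 ∩ {x | lam < f x})) lam := by
        refine ENNReal.tsum_le_tsum fun P => ?_
        rw [lintegral_indicator (measurableSet_goodLevels Q f a P.1),
          ← lintegral_const_mul _ (measurable_volume_inter_superlevel f P.1),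
          ← setLIntegral_const]
        refine setLIntegral_mono' (measurableSet_goodLevels Q f a P.1) fun lam hlam => ?_
        rw [inter_comm]
        exact hlam.2.1.prop.2
    _ = 2 ^ (d + 1) * ∫⁻ lam, ∑' P : dyadicSubcubes Q, (goodLevels Q f a P.1).indicator
          (fun lam => volume (P.1 ∩ {x | lam < f x})) lam := by
        rw [ENNReal.tsum_mul_left, lintegral_tsum]
        exact fun P => ((measurable_volume_inter_superlevel f P.1).indicator
          (measurableSet_goodLevels Q f a P.1)).aemeasurable
    _ ≤ 2 ^ (d + 1) * ∫⁻ lam, ∑' R : {P : Set (Ed d) // IsDyadicCube P ∧ P ⊂ Q},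
        (Ico (mLevel Q f R.1) (⨍ z in R.1, f z)).indicator
          (fun lam => volume (R.1 ∩ {x | lam < f x})) lam := by
        gcongr with lam
        exact hlevel lam
    _ = _ := by
        rw [lintegral_tsum]
        · congr 1
          refine tsum_congr fun R => ?_
          rw [lintegral_indicator measurableSet_Ico, setLIntegral_congr Ioo_ae_eq_Ico]
        · exact fun R => ((measurable_volume_inter_superlevel f R.1).indicator
            measurableSet_Ico).aemeasurable

lemma ofReal_setIntegral_le_of_partition {α ι : Type*} [MeasurableSpace α] {μ : Measure α}
    [Countable ι] {Q : Set α} (hQ : MeasurableSet Q) {P : ι → Set α}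
    (hPm : ∀ i, MeasurableSet (P i)) (hPd : Pairwise (Function.onFun Disjoint P))
    (hPQ : ∀ i, P i ⊆ Q) {u : α → ℝ} (hu : IntegrableOn u Q μ) {g : α → ℝ≥0∞}
    (hP : ∀ i, ENNReal.ofReal (∫ x in P i, u x ∂μ) ≤ ∫⁻ x in P i, g x ∂μ)
    (hW : ∀ᵐ x ∂μ, x ∈ Q \ ⋃ i, P i → ENNReal.ofReal (u x) ≤ g x) :
    ENNReal.ofReal (∫ x in Q, u x ∂μ) ≤ ∫⁻ x in Q, g x ∂μ := by
  have hUm : MeasurableSet (⋃ i, P i) := MeasurableSet.iUnion hPm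
  have hUQ : ⋃ i, P i ⊆ Q := iUnion_subset hPQ
  have hU : ENNReal.ofReal (∫ x in ⋃ i, P i, u x ∂μ) ≤ ∫⁻ x in ⋃ i, P i, g x ∂μ := by
    rw [lintegral_iUnion hPm hPd]
    have hs := hasSum_integral_iUnion hPm hPd (hu.mono_set hUQ)
    refine le_of_tendsto (ENNReal.tendsto_ofReal hs) (Eventually.of_forall fun s => ?_)
    calc ENNReal.ofReal (∑ i ∈ s, ∫ x in P i, u x ∂μ)
        ≤ ∑ i ∈ s, ENNReal.ofReal (∫ x in P i, u x ∂μ) := by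
          induction s using Finset.cons_induction with
          | empty => simp
          | cons i s hi ih =>
            rw [Finset.sum_cons, Finset.sum_cons]
            exact ENNReal.ofReal_add_le.trans (by gcongr)
      _ ≤ ∑ i ∈ s, ∫⁻ x in P i, g x ∂μ := Finset.sum_le_sum fun i _ => hP i
      _ ≤ ∑' i, ∫⁻ x in P i, g x ∂μ := ENNReal.sum_le_tsum s
  have hW' : ENNReal.ofReal (∫ x in Q \ ⋃ i, P i, u x ∂μ) ≤ ∫⁻ x in Q \ ⋃ i, P i, g x ∂μ := by
    have hint : IntegrableOn u (Q \ ⋃ i, P i) μ := hu.mono_set sdiff_subset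
    calc ENNReal.ofReal (∫ x in Q \ ⋃ i, P i, u x ∂μ)
        ≤ ENNReal.ofReal (∫ x in Q \ ⋃ i, P i, max (u x) 0 ∂μ) :=
          ENNReal.ofReal_le_ofReal (integral_mono hint hint.pos_part fun x => le_max_left _ _)
      _ = ∫⁻ x in Q \ ⋃ i, P i, ENNReal.ofReal (max (u x) 0) ∂μ :=
          ofReal_integral_eq_lintegral_ofReal hint.pos_part
            (Eventually.of_forall fun x => le_max_right _ _)
      _ ≤ ∫⁻ x in Q \ ⋃ i, P i, g x ∂μ := by
          refine setLIntegral_mono_ae' (hQ.diff hUm) ?_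
          filter_upwards [hW] with x hx hxW
          simpa using hx hxW
  calc ENNReal.ofReal (∫ x in Q, u x ∂μ)
      = ENNReal.ofReal ((∫ x in ⋃ i, P i, u x ∂μ) + ∫ x in Q \ ⋃ i, P i, u x ∂μ) := by
        rw [← setIntegral_union disjoint_sdiff_right (hQ.diff hUm) (hu.mono_set hUQ)
          (hu.mono_set sdiff_subset), union_sdiff_cancel hUQ]
    _ ≤ (∫⁻ x in ⋃ i, P i, g x ∂μ) + ∫⁻ x in Q \ ⋃ i, P i, g x ∂μ :=
        ENNReal.ofReal_add_le.trans (add_le_add hU hW')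
    _ = ∫⁻ x in Q, g x ∂μ := by
        rw [← lintegral_union (hQ.diff hUm) disjoint_sdiff_right, union_sdiff_cancel hUQ]

lemma ofReal_sub_le_tsum_indicator_goodLevels {d : ℕ} {Q : Set (Ed d)} {f : Ed d → ℝ} {a b : ℝ}
    {x : Ed d} (h : ∀ lam ∈ Ico a b, ∃ P ∈ dyadicSubcubes Q, x ∈ P ∧ lam ∈ goodLevels Q f a P) :
    ENNReal.ofReal (b - a) ≤ ∑' P : dyadicSubcubes Q,
      P.1.indicator (fun _ => volume (goodLevels Q f a P.1)) x := by
  calc ENNReal.ofReal (b - a) = volume (Ico a b) := Real.volume_Ico.symm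
    _ ≤ volume (⋃ P : dyadicSubcubes Q, {lam ∈ goodLevels Q f a P.1 | x ∈ P.1}) := by
        refine measure_mono fun lam hlam => ?_
        obtain ⟨P, hP, hxP, hgood⟩ := h lam hlam
        exact mem_iUnion.2 ⟨⟨P, hP⟩, hgood, hxP⟩
    _ ≤ ∑' P : dyadicSubcubes Q, volume {lam ∈ goodLevels Q f a P.1 | x ∈ P.1} :=
        measure_iUnion_le _
    _ ≤ _ := by
        refine ENNReal.tsum_le_tsum fun P => ?_
        by_cases hx : x ∈ P.1
        · rw [indicator_of_mem hx]
          exact measure_mono fun lam hlam => hlam.1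
        · simp [hx]

lemma ae_exists_denseAt {d : ℕ} {Q : Set (Ed d)} (hQ : IsDyadicCube Q) (f : Ed d → ℝ) :
    ∀ᵐ x : Ed d, x ∈ Q → ∀ lam : ℝ, lam < f x →
      ∃ P ∈ dyadicSubcubes Q, x ∈ P ∧ IsDenseAt f lam P := by
  have hrat : ∀ q : ℚ, ∀ᵐ x : Ed d, x ∈ Q → (q : ℝ) < f x →
      ∃ P ∈ dyadicSubcubes Q, x ∈ P ∧ IsDenseAt f q P := by
    intro q
    have h2 : (2 : ℝ≥0∞) ≤ 2 ^ (d + 1) := le_self_pow₀ one_le_two (by lia)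
    refine measure_mono_null ?_ (measure_not_mem_dense_cube hQ {x | (q : ℝ) < f x} h2)
    intro x hx
    simp only [mem_compl_iff, mem_ofPred_eq, not_forall] at hx
    obtain ⟨hxQ, hqx, hne⟩ := hx
    exact ⟨⟨hqx, hxQ⟩, fun P hP hxP hdense => hne ⟨P, hP, hxP, hdense⟩⟩
  filter_upwards [ae_all_iff.2 hrat] with x hx hxQ lam hlam
  obtain ⟨q, hlq, hqf⟩ := exists_rat_btwn hlam
  obtain ⟨P, hP, hxP, hdense⟩ := hx q hxQ hqf
  exact ⟨P, hP, hxP, hdense.anti hlq.le⟩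

lemma setIntegral_sub_const {d : ℕ} {P : Set (Ed d)} (hP : IsDyadicCube P) {f : Ed d → ℝ}
    (hf : IntegrableOn f P volume) (c : ℝ) :
    ∫ x in P, (f x - c) = (volume P).toReal * ((⨍ x in P, f x) - c) := by
  have hne : (volume P).toReal ≠ 0 := ENNReal.toReal_ne_zero.2 ⟨hP.volume_ne_zero, hP.volume_ne_top⟩
  rw [integral_sub hf (integrableOn_const hP.volume_ne_top), setAverage_eq, setIntegral_const,
    smul_eq_mul, smul_eq_mul, measureReal_def]
  field_simp

lemma ofReal_setIntegral_sub_le {d : ℕ} {Q : Set (Ed d)} (hQ : IsDyadicCube Q) {f : Ed d → ℝ}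
    (hf : IntegrableOn f Q volume) {lam₀ a : ℝ} (ha : lam₀ ≤ a) :
    ENNReal.ofReal (∫ x in Q, (f x - lam₀)) ≤
      ENNReal.ofReal (a - lam₀) * volume (⋃ P : {P // IsMaxDenseAt Q f lam₀ P}, P.1) +
        ∑' P : dyadicSubcubes Q, volume P.1 * volume (goodLevels Q f a P.1) := by
  set c := ENNReal.ofReal (a - lam₀)
  set U := ⋃ P : {P // IsMaxDenseAt Q f lam₀ P}, P.1
  have hUm : MeasurableSet U := MeasurableSet.iUnion fun P => P.2.prop.1.1.measurableSet
  set h : Ed d → ℝ≥0∞ := fun x => ∑' P : dyadicSubcubes Q,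
    P.1.indicator (fun _ => volume (goodLevels Q f a P.1)) x
  have hmemU : ∀ P ∈ dyadicSubcubes Q, IsDenseAt f lam₀ P → P ⊆ U := by
    intro P hP hdense x hx
    obtain ⟨R, hPR, hR⟩ := exists_maximal_dyadicSubcube hQ (IsDenseAt f lam₀) hP hdense
    exact mem_iUnion.2 ⟨⟨R, hR⟩, hPR hx⟩
  let bad : Set (Ed d) → Prop := fun P => ∃ lam, a ≤ lam ∧ IsMaxDenseAt Q f lam P ∧
    ∀ R ∈ dyadicSubcubes Q, P ⊆ R → ⨍ z in R, f z ≤ lam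
  have hgood : ∀ P lam, a ≤ lam → IsMaxDenseAt Q f lam P → ¬ bad P →
      lam ∈ goodLevels Q f a P := by
    intro P lam hlam hP hnb
    refine ⟨hlam, hP, ?_⟩
    by_contra! hne
    exact hnb ⟨lam, hlam, hP, hne⟩
  have key : ENNReal.ofReal (∫ x in Q, (f x - lam₀)) ≤
      ∫⁻ x in Q, (U.indicator (fun _ => c) x + h x) := by
    refine ofReal_setIntegral_le_of_partition hQ.measurableSet (u := fun x => f x - lam₀)
      (P := fun P : {P // Maximal (fun R => R ∈ dyadicSubcubes Q ∧ bad R) P} => P.1)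
      (fun P => P.2.prop.1.1.measurableSet) (pairwise_disjoint_maximal bad)
      (fun P => P.2.prop.1.2) (hf.sub (integrableOn_const hQ.volume_ne_top)) ?_ ?_
    · rintro ⟨P, hP⟩
      obtain ⟨hPsub, lam, halam, hmax, havg⟩ := hP.prop
      have hlow : ∀ x ∈ P, c + ENNReal.ofReal ((⨍ z in P, f z) - a) ≤
          U.indicator (fun _ => c) x + h x := by
        intro x hx
        rw [indicator_of_mem (hmemU P hPsub (hmax.prop.2.anti (ha.trans halam)) hx)]
        gcongr
        refine ofReal_sub_le_tsum_indicator_goodLevels fun s hs => ?_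
        have hslam : s < lam := hs.2.trans_le (havg P hPsub Subset.rfl)
        obtain ⟨R, hPR, hR⟩ := exists_maximal_dyadicSubcube hQ (IsDenseAt f s) hPsub
          (hmax.prop.2.anti hslam.le)
        refine ⟨R, hR.prop.1, hPR hx, hs.1, hR, ?_⟩
        by_contra! hne
        have hbad : bad R := ⟨s, hs.1, hR, hne⟩
        have hRP : R ⊆ P := hP.2 ⟨hR.prop.1, hbad⟩ hPR
        exact not_lt.2 (hne P hPsub hRP) hs.2
      calc ENNReal.ofReal (∫ x in P, (f x - lam₀))
          ≤ volume P * (c + ENNReal.ofReal ((⨍ z in P, f z) - a)) := by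
            rw [setIntegral_sub_const hPsub.1 (hf.mono_set hPsub.2),
              ENNReal.ofReal_mul ENNReal.toReal_nonneg,
              ENNReal.ofReal_toReal hPsub.1.volume_ne_top]
            gcongr
            refine le_trans (le_of_eq ?_) ENNReal.ofReal_add_le
            congr 1
            ring
        _ = ∫⁻ _ in P, (c + ENNReal.ofReal ((⨍ z in P, f z) - a)) := by
            rw [setLIntegral_const, mul_comm]
        _ ≤ ∫⁻ x in P, (U.indicator (fun _ => c) x + h x) :=
            setLIntegral_mono' hPsub.1.measurableSet hlow
    · filter_upwards [ae_exists_denseAt hQ f] with x hx hxW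
      obtain ⟨hxQ, hxnb⟩ := hxW
      rcases le_or_gt (f x) lam₀ with hle | hlt
      · rw [ENNReal.ofReal_of_nonpos (sub_nonpos.2 hle)]
        exact zero_le
      obtain ⟨P, hP, hxP, hdense⟩ := hx hxQ lam₀ hlt
      rw [indicator_of_mem (hmemU P hP hdense hxP)]
      calc ENNReal.ofReal (f x - lam₀) ≤ c + ENNReal.ofReal (f x - a) := by
            refine le_trans (le_of_eq ?_) ENNReal.ofReal_add_le
            congr 1
            ring
        _ ≤ c + h x := by
            gcongr
            refine ofReal_sub_le_tsum_indicator_goodLevels fun s hs => ?_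
            obtain ⟨R, hR, hxR, hRdense⟩ := hx hxQ s hs.2
            obtain ⟨S, hRS, hS⟩ := exists_maximal_dyadicSubcube hQ (IsDenseAt f s) hR hRdense
            refine ⟨S, hS.prop.1, hRS hxR, hgood S s hs.1 hS fun hbad => hxnb ?_⟩
            obtain ⟨T, hST, hT⟩ := exists_maximal_dyadicSubcube hQ bad hS.prop.1 hbad
            exact mem_iUnion.2 ⟨⟨T, hT⟩, hST (hRS hxR)⟩
  refine key.trans ?_
  have hhm : ∀ P : dyadicSubcubes Q,
      Measurable (P.1.indicator fun _ : Ed d => volume (goodLevels Q f a P.1)) :=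
    fun P => measurable_const.indicator P.2.1.measurableSet
  refine (setLIntegral_le_lintegral _ _).trans ?_
  rw [lintegral_add_left (measurable_const.indicator hUm), lintegral_indicator_const hUm,
    lintegral_tsum fun P => (hhm P).aemeasurable]
  gcongr with P
  rw [lintegral_indicator_const P.2.1.measurableSet, mul_comm]

/-- If `|{f > λ₀} ∩ Q₀| ≤ 2^{-d-2}|Q₀|` then
`|Q₀| (f_{Q₀} − λ₀) ≤ 2^{d+2} Σ_{P dyadic, P ⊊ Q₀} ∫_{(m_P, f_P)} |P ∩ {f > λ}| dλ`. -/
theorem mass_bound_by_subcube_integrals {d : ℕ} (hd : 1 ≤ d)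
    (Q₀ : Set (Ed d)) (hQ₀ : IsDyadicCube Q₀) (lam₀ : ℝ) (f : Ed d → ℝ)
    (hf : IntegrableOn f Q₀ volume)
    (hsmall : volume ({x | lam₀ < f x} ∩ Q₀) ≤ volume Q₀ / 2 ^ (d + 2)) :
    ENNReal.ofReal ((volume Q₀).toReal * ((⨍ z in Q₀, f z) - lam₀)) ≤
      2 ^ (d + 2) *
        ∑' P : {P : Set (Ed d) // IsDyadicCube P ∧ P ⊂ Q₀},
          ∫⁻ lam in Set.Ioo (mLevel Q₀ f P.1) (⨍ z in P.1, f z),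
            volume (P.1 ∩ {x | lam < f x}) := by
  rcases le_or_gt (⨍ z in Q₀, f z) lam₀ with hle | hlt
  · rw [ENNReal.ofReal_of_nonpos
      (mul_nonpos_of_nonneg_of_nonpos ENNReal.toReal_nonneg (sub_nonpos.2 hle))]
    exact zero_le
  have hS := tsum_volume_mul_goodLevels_le hd hQ₀ f
  have hmain := ofReal_setIntegral_sub_le hQ₀ hf hlt.le
  rw [setIntegral_sub_const hQ₀ hf] at hmain
  set a := ⨍ z in Q₀, f z
  set X := ENNReal.ofReal ((volume Q₀).toReal * (a - lam₀)) with hX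
  have hXeq : X = volume Q₀ * ENNReal.ofReal (a - lam₀) := by
    rw [hX, ENNReal.ofReal_mul ENNReal.toReal_nonneg, ENNReal.ofReal_toReal hQ₀.volume_ne_top]
  have hU : volume (⋃ P : {P // IsMaxDenseAt Q₀ f lam₀ P}, P.1) ≤ volume Q₀ / 2 := by
    refine (volume_iUnion_maxDense_le Q₀ f lam₀).trans ?_
    calc (2 : ℝ≥0∞) ^ (d + 1) * volume ({x | lam₀ < f x} ∩ Q₀)
        ≤ 2 ^ (d + 1) * (volume Q₀ / 2 ^ (d + 1 + 1)) := by gcongr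
      _ = volume Q₀ / 2 := by
        rw [pow_succ _ (d + 1), div_eq_mul_inv, ENNReal.mul_inv (by simp) (by simp),
          mul_left_comm, ← mul_assoc (2 ^ (d + 1)), ENNReal.mul_inv_cancel (by simp)
          (by finiteness), one_mul, div_eq_mul_inv]
  set S := ∑' P : {P : Set (Ed d) // IsDyadicCube P ∧ P ⊂ Q₀},
          ∫⁻ lam in Set.Ioo (mLevel Q₀ f P.1) (⨍ z in P.1, f z),
            volume (P.1 ∩ {x | lam < f x})
  have hle : X / 2 + X / 2 ≤ X / 2 + 2 ^ (d + 1) * S := by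
    rw [ENNReal.add_halves]
    refine hmain.trans (add_le_add ?_ hS)
    rw [hXeq, mul_comm (volume Q₀), mul_div_assoc]
    gcongr
  have hhalf := (ENNReal.add_le_add_iff_left (by finiteness)).1 hle
  calc X = 2 * (X / 2) := by rw [two_mul, ENNReal.add_halves]
    _ ≤ 2 * (2 ^ (d + 1) * S) := by gcongr
    _ = 2 ^ (d + 2) * S := by ring

end
end
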